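/- Suppose M is contractive with contraction rate 0 < a < 1 and uniformly continuous with b < ∞. Then E(M) ⊆ Φ(P(M)) ⊆ Ẽ(M), and F(Φ(μ)) = μ for every invariant measure μ ∈ P(M). -/

import Mathlib

open MeasureTheory Filter Topology
open scoped ENNReal NNReal Classical

noncomputable section

/-- A countable Markov system `(K_{i(e)}, w_e, p_e)_{e ∈ E}` on a metric space `K`:
a partition `(K_j)_{j ∈ N}` of `K` into nonempty Borel sets, source and target maps
`i, t : E → N` (`i` surjective), and for each `e ∈ E` Borel maps `w_e` and probability
functions `p_e` (extended by zero outside `K_{i(e)}`) with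
`∑_{e, i(e)=j} p_e(y) = 1` for `y ∈ K_j`. -/
structure MarkovSystem (K : Type*) [MetricSpace K] [MeasurableSpace K]
    (N : Type*) (E : Type*) where
  Kset : N → Set K
  Kset_nonempty : ∀ j, (Kset j).Nonempty
  Kset_measurable : ∀ j, MeasurableSet (Kset j)
  Kset_disjoint : Pairwise (Function.onFun Disjoint Kset)
  Kset_cover : (⋃ j, Kset j) = Set.univ
  i : E → N
  t : E → N
  i_surj : Function.Surjective i
  w : E → K → K
  p : E → K → ℝ
  w_measurable : ∀ e, Measurable (w e)
  p_measurable : ∀ e, Measurable (p e)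
  p_nonneg : ∀ e x, 0 ≤ p e x
  p_le_one : ∀ e x, p e x ≤ 1
  p_zero_outside : ∀ e x, x ∉ Kset (i e) → p e x = 0
  w_mapsTo : ∀ e, Set.MapsTo (w e) (Kset (i e)) (Kset (t e))
  p_pos_somewhere : ∀ e, ∃ x ∈ Kset (i e), 0 < p e x
  p_tsum_one : ∀ j, ∀ x ∈ Kset j, (∑' e : {e : E // i e = j}, p e.val x) = 1

/-- `Ē = E ∪ {∞}` (one-point compactification); with `E` countable its Borel σ-algebra
consists of all subsets. -/
instance optionMeasurableSpace (E : Type*) : MeasurableSpace (Option E) := ⊤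

/-- The code space `Σ̄ = Ē^ℤ`, carrying the product σ-algebra. -/
abbrev CodeSpace (E : Type*) : Type _ := ℤ → Option E

/-- The left shift `S` on the code space, `(Sσ)_{k-1} = σ_k`. -/
def shiftMap (E : Type*) : CodeSpace E → CodeSpace E := fun σ k => σ (k + 1)

/-- The cylinder set `_m[es₀, …, es_{n}] = {σ : σ_{m+k} = es_k}`. -/
def cylSetL {E : Type*} (m : ℤ) (es : List (Option E)) : Set (CodeSpace E) :=
  {σ | ∀ (k : ℕ) (h : k < es.length), σ (m + (k : ℤ)) = es.get ⟨k, h⟩}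

/-- The σ-algebra `𝓕` generated by the cylinder sets `_m[e_m, …, e_0]`, `m ≤ 0`. -/
def pastAlgebra (E : Type*) : MeasurableSpace (CodeSpace E) :=
  MeasurableSpace.generateFrom
    {A | ∃ es : List (Option E), es ≠ [] ∧ A = cylSetL (1 - (es.length : ℤ)) es}

/-- The conditional entropy `h_S(Λ) = H_Λ((_1[e])_{e ∈ Ē} | 𝓕)`. -/
def entropyS {E : Type*} (Λ : Measure (CodeSpace E)) : ℝ≥0∞ :=
  ∑' eo : Option E,
    ∫⁻ σ, ENNReal.ofReal
        (Real.negMulLog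
          ((Λ[Set.indicator {τ : CodeSpace E | τ 1 = eo} (fun _ => (1 : ℝ)) | pastAlgebra E]) σ)) ∂Λ

namespace MarkovSystem

variable {K : Type*} [MetricSpace K] [MeasurableSpace K] {N E : Type*}

/-- The Markov operator `Uf = ∑_e p_e · (f ∘ w_e)` acting on nonnegative Borel functions. -/
def markovOp (M : MarkovSystem K N E) (f : K → ℝ≥0∞) : K → ℝ≥0∞ :=
  fun x => ∑' e : E, ENNReal.ofReal (M.p e x) * f (M.w e x)

/-- The adjoint operator `U*` acting on measures, `(U*ν)(B) = ∫ U(1_B) dν`. -/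
def adjOp (M : MarkovSystem K N E) (ν : Measure K) : Measure K :=
  Measure.sum fun e : E =>
    Measure.map (M.w e) (ν.withDensity fun x => ENNReal.ofReal (M.p e x))

/-- `μ ∈ P(M)`: `μ` is an invariant Borel probability measure, `U*μ = μ`. -/
def IsInvariantMeasure (M : MarkovSystem K N E) (μ : Measure K) : Prop :=
  IsProbabilityMeasure μ ∧ M.adjOp μ = μ

/-- The path space `Σ_G`: all coordinates lie in `E` and `i(σ_{n+1}) = t(σ_n)`. -/
def pathSpace (M : MarkovSystem K N E) : Set (CodeSpace E) :=
  {σ | ∀ n : ℤ, ∃ e e' : E, σ n = some e ∧ σ (n + 1) = some e' ∧ M.i e' = M.t e}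

/-- `T_j = {σ ∈ Σ_G : t(σ_0) = j}`. -/
def Tset (M : MarkovSystem K N E) (j : N) : Set (CodeSpace E) :=
  {σ | σ ∈ M.pathSpace ∧ ∃ e : E, σ 0 = some e ∧ M.t e = j}

/-- `w` extended to `Ē`, with `w_∞ = id`. -/
def wext (M : MarkovSystem K N E) : Option E → K → K := fun o => o.elim id M.w

/-- `p` extended to `Ē`, with `p_∞ = 0`. -/
def pext (M : MarkovSystem K N E) : Option E → K → ℝ := fun o => o.elim (fun _ => 0) M.p

/-- `i` extended to `Ē`, with `i(∞) = j₀`. -/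
def iext (M : MarkovSystem K N E) (j0 : N) : Option E → N := fun o => o.elim j0 M.i

/-- `t` extended to `Ē`, with `t(∞) = j₀`. -/
def text (M : MarkovSystem K N E) (j0 : N) : Option E → N := fun o => o.elim j0 M.t

/-- `iterW M σ n y = w_{σ_0} ∘ w_{σ_{-1}} ∘ ⋯ ∘ w_{σ_{-n}} (y)`. -/
def iterW (M : MarkovSystem K N E) (σ : CodeSpace E) : ℕ → K → K
  | 0, y => M.wext (σ 0) y
  | n + 1, y => M.iterW σ n (M.wext (σ (-(n + 1 : ℤ))) y)

/-- `orbit M j0 xp σ n = w_{σ_0} ∘ ⋯ ∘ w_{σ_{-n}} (x_{i(σ_{-n})})`. -/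
def orbit (M : MarkovSystem K N E) (j0 : N) (xp : N → K) (σ : CodeSpace E) (n : ℕ) : K :=
  M.iterW σ n (xp (M.iext j0 (σ (-(n : ℤ)))))

/-- `D`: the set of `σ ∈ Σ_G` for which `lim_{m → -∞} w_{σ_0} ∘ ⋯ ∘ w_{σ_m}(x_{i(σ_m)})` exists. -/
def codeDomain (M : MarkovSystem K N E) (j0 : N) (xp : N → K) : Set (CodeSpace E) :=
  {σ | σ ∈ M.pathSpace ∧ ∃ l : K, Tendsto (fun n : ℕ => M.orbit j0 xp σ n) atTop (𝓝 l)}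

/-- The coding map `F`: the above limit on `D`, and `x_{t(σ_0)}` elsewhere. -/
def code (M : MarkovSystem K N E) (j0 : N) (xp : N → K) (σ : CodeSpace E) : K :=
  if h : σ ∈ M.codeDomain j0 xp then h.2.choose else xp (M.text j0 (σ 0))

/-- `Λ ∈ E(M)`: `Λ` is a shift-invariant Borel probability measure with `Λ(D) = 1` and
`E_Λ(1_{_1[e]} | 𝓕) = p_e ∘ F` `Λ`-a.e. for every `e ∈ E` (an equilibrium state). -/
def IsEquilibrium (M : MarkovSystem K N E) (j0 : N) (xp : N → K)
    (Λ : Measure (CodeSpace E)) : Prop :=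
  IsProbabilityMeasure Λ ∧ Measure.map (shiftMap E) Λ = Λ ∧
    Λ (M.codeDomain j0 xp) = 1 ∧
    ∀ e : E,
      (Λ[Set.indicator {σ : CodeSpace E | σ 1 = some e} (fun _ => (1 : ℝ)) | pastAlgebra E])
        =ᵐ[Λ] fun σ => M.p e (M.code j0 xp σ)

/-- `pbar` is the family of continuous extensions `p̄_e` of `p_e|_{K_{i(e)}}` to the closure
of `K_{i(e)}`, extended further by zero on `K`. -/
def IsUCExtensionP (M : MarkovSystem K N E) (pbar : E → K → ℝ) : Prop :=
  ∀ e : E, ContinuousOn (pbar e) (closure (M.Kset (M.i e))) ∧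
    (∀ x ∈ M.Kset (M.i e), pbar e x = M.p e x) ∧
    (∀ x, x ∉ closure (M.Kset (M.i e)) → pbar e x = 0)

/-- `wb` is a family of continuous extensions `w̄_e` of `w_e|_{K_{i(e)}}` to the closure
of `K_{i(e)}`. -/
def IsUCExtensionW (M : MarkovSystem K N E) (wb : E → K → K) : Prop :=
  ∀ e : E, ContinuousOn (wb e) (closure (M.Kset (M.i e))) ∧
    (∀ x ∈ M.Kset (M.i e), wb e x = M.w e x)

/-- The Markov system is uniformly continuous: each `w_e|_{K_{i(e)}}` and `p_e|_{K_{i(e)}}`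
is uniformly continuous. -/
def IsUniformlyContinuous (M : MarkovSystem K N E) : Prop :=
  ∀ e : E, UniformContinuousOn (M.w e) (M.Kset (M.i e)) ∧
    UniformContinuousOn (M.p e) (M.Kset (M.i e))

/-- `∂p_e = p̄_e · 1_{cl(K_{i(e)}) \ K_{i(e)}}`. -/
def dp (M : MarkovSystem K N E) (pbar : E → K → ℝ) (e : E) : K → ℝ :=
  Set.indicator (closure (M.Kset (M.i e)) \ M.Kset (M.i e)) (pbar e)

/-- `Λ ∈ Ẽ(M)` (asymptotic state): shift-invariant probability with `Λ(D) = 1` and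
`E_Λ(1_{_1[e]} | 𝓕) = (p̄_e ∘ F)·1_{T_{i(e)}}` `Λ`-a.e. for every `e`. -/
def IsAsymptotic (M : MarkovSystem K N E) (j0 : N) (xp : N → K) (pbar : E → K → ℝ)
    (Λ : Measure (CodeSpace E)) : Prop :=
  IsProbabilityMeasure Λ ∧ Measure.map (shiftMap E) Λ = Λ ∧
    Λ (M.codeDomain j0 xp) = 1 ∧
    ∀ e : E,
      (Λ[Set.indicator {σ : CodeSpace E | σ 1 = some e} (fun _ => (1 : ℝ)) | pastAlgebra E])
        =ᵐ[Λ] Set.indicator (M.Tset (M.i e)) (fun σ => pbar e (M.code j0 xp σ))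

/-- `Λ ∈ E_⊥(M)`: shift-invariant probability with `Λ(D) = 1` and
`E_Λ(1_{_1[e]} | 𝓕) = (∂p_e ∘ F)·1_{T_{i(e)}}` `Λ`-a.e. for every `e`. -/
def IsPerp (M : MarkovSystem K N E) (j0 : N) (xp : N → K) (pbar : E → K → ℝ)
    (Λ : Measure (CodeSpace E)) : Prop :=
  IsProbabilityMeasure Λ ∧ Measure.map (shiftMap E) Λ = Λ ∧
    Λ (M.codeDomain j0 xp) = 1 ∧
    ∀ e : E,
      (Λ[Set.indicator {σ : CodeSpace E | σ 1 = some e} (fun _ => (1 : ℝ)) | pastAlgebra E])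
        =ᵐ[Λ] Set.indicator (M.Tset (M.i e)) (fun σ => M.dp pbar e (M.code j0 xp σ))

/-- `G = ⋃_{k ≥ 0} ⋃_{j ∈ N} S^{-k}(F^{-1}(K_j) ∩ T_j)`. -/
def Gset (M : MarkovSystem K N E) (j0 : N) (xp : N → K) : Set (CodeSpace E) :=
  ⋃ (k : ℕ) (j : N), (shiftMap E)^[k] ⁻¹' ((M.code j0 xp) ⁻¹' (M.Kset j) ∩ M.Tset j)

/-- `M` is non-degenerate: for every asymptotic state `Λ` there is `i ∈ N` with
`Λ(T_i ∩ F^{-1}(K_i)) > 0`. -/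
def IsNonDegenerate (M : MarkovSystem K N E) (j0 : N) (xp : N → K) (pbar : E → K → ℝ) : Prop :=
  ∀ Λ : Measure (CodeSpace E), M.IsAsymptotic j0 xp pbar Λ →
    ∃ i : N, 0 < Λ (M.Tset i ∩ (M.code j0 xp) ⁻¹' (M.Kset i))

/-- `M` is consistent: `F(Λ) ∈ P(M)` for every asymptotic state `Λ`. -/
def IsConsistent (M : MarkovSystem K N E) (j0 : N) (xp : N → K) (pbar : E → K → ℝ) : Prop :=
  ∀ Λ : Measure (CodeSpace E), M.IsAsymptotic j0 xp pbar Λ →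
    M.IsInvariantMeasure (Measure.map (M.code j0 xp) Λ)

/-- `Rf = ∑_e ∂p_e · (f ∘ w̄_e)`. -/
def Rop (M : MarkovSystem K N E) (pbar : E → K → ℝ) (wb : E → K → K)
    (f : K → ℝ≥0∞) : K → ℝ≥0∞ :=
  fun x => ∑' e : E, ENNReal.ofReal (M.dp pbar e x) * f (wb e x)

/-- `Ω = ⋂_{n ≥ 1} {R^n 1 ≥ 1}`. -/
def OmegaSet (M : MarkovSystem K N E) (pbar : E → K → ℝ) (wb : E → K → K) : Set K :=
  ⋂ n : ℕ, {x : K | 1 ≤ (M.Rop pbar wb)^[n + 1] (fun _ => 1) x}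

/-- `ξ_j = ∑_{e, i(e) = j} sup_{x ∈ K_j} p_e(x)`. -/
def xi (M : MarkovSystem K N E) (j : N) : ℝ≥0∞ :=
  ∑' e : {e : E // M.i e = j}, ⨆ x ∈ M.Kset j, ENNReal.ofReal (M.p e.val x)

/-- `M` has a dominating Markov chain: `ξ_j < ∞` for all `j ∈ N`. -/
def HasDominatingChain (M : MarkovSystem K N E) : Prop := ∀ j : N, M.xi j ≠ ⊤

/-- `ξ_j · q_{j j'} = ∑_{e, i(e) = j, t(e) = j'} sup_{x ∈ K_j} p_e(x)`. -/
def xiq (M : MarkovSystem K N E) (j j' : N) : ℝ≥0∞ :=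
  ∑' e : {e : E // M.i e = j ∧ M.t e = j'}, ⨆ x ∈ M.Kset j, ENNReal.ofReal (M.p e.val x)

/-- `c = ∑_{j'} sup_j ξ_j q_{j j'}`. -/
def cConst (M : MarkovSystem K N E) : ℝ≥0∞ := ∑' j' : N, ⨆ j : N, M.xiq j j'

/-- `α^{x_0}_n({j}) = (1/n) ∑_{k=1}^n ((U*)^k δ_{x_0})(K_j)`. -/
def alphaMeas (M : MarkovSystem K N E) (x0 : K) (n : ℕ) (j : N) : ℝ≥0∞ :=
  (n : ℝ≥0∞)⁻¹ * ∑ k ∈ Finset.range n, (M.adjOp^[k + 1] (Measure.dirac x0)) (M.Kset j)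

/-- Condition (T) at `x_0`: the sequence `(α^{x_0}_n)_n` is uniformly tight. -/
def ConditionT (M : MarkovSystem K N E) (x0 : K) : Prop :=
  ∀ ε : ℝ, 0 < ε → ∃ V : Finset N,
    ∀ n : ℕ, (∑' j : {j : N // j ∉ V}, M.alphaMeas x0 (n + 1) j.val) < ENNReal.ofReal ε

/-- `M` is contractive with contraction rate `a`:
`∑_{e, i(e) = j} p_e(x) d(w_e x, w_e y) ≤ a·d(x, y)` on each `K_j`. -/
def IsContractive (M : MarkovSystem K N E) (a : ℝ) : Prop :=
  ∀ j : N, ∀ x ∈ M.Kset j, ∀ y ∈ M.Kset j,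
    (∑' e : {e : E // M.i e = j},
        ENNReal.ofReal (M.p e.val x * dist (M.w e.val x) (M.w e.val y)))
      ≤ ENNReal.ofReal (a * dist x y)

/-- `L(x) = ∑_j d(x, x_j)·1_{K_j}(x)`. -/
def Lfun (M : MarkovSystem K N E) (xp : N → K) : K → ℝ≥0∞ :=
  fun x => ∑' j : N, Set.indicator (M.Kset j) (fun y => ENNReal.ofReal (dist y (xp j))) x

/-- `b = sup_j sup_{x ∈ K_j} ∑_{e, i(e) = j} p_e(x)·d(w_e(x_{i(e)}), x_{t(e)})`. -/
def bConst (M : MarkovSystem K N E) (xp : N → K) : ℝ≥0∞ :=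
  ⨆ j : N, ⨆ x ∈ M.Kset j,
    ∑' e : {e : E // M.i e = j},
      ENNReal.ofReal (M.p e.val x * dist (M.w e.val (xp (M.i e.val))) (xp (M.t e.val)))

/-- `P^m_x` evaluated on a word: `p_{e_0}(x)·p_{e_1}(w_{e_0}x)·⋯`. -/
def wordProb (M : MarkovSystem K N E) : List (Option E) → K → ℝ
  | [], _ => 1
  | o :: rest, x => M.pext o x * M.wordProb rest (M.wext o x)

/-- `Λ = Φ(μ)`: `Λ` is a shift-invariant Borel probability measure with
`Λ(_m[e_m, …, e_n]) = ∫ P^m_x(_m[e_m, …, e_n]) dμ(x)` for all cylinders with `m ≤ 0`. -/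
def IsPhiOf (M : MarkovSystem K N E) (μ : Measure K) (Λ : Measure (CodeSpace E)) : Prop :=
  IsProbabilityMeasure Λ ∧ Measure.map (shiftMap E) Λ = Λ ∧
    ∀ m : ℤ, m ≤ 0 → ∀ es : List (Option E),
      Λ (cylSetL m es) = ∫⁻ x, ENNReal.ofReal (M.wordProb es x) ∂μ

/-- The (negative of the) energy function: `-u(σ) = -log p_{σ_1}(F(σ))` on `D`
(`+∞` if `p_{σ_1}(F(σ)) = 0`) and `+∞` off `D`, valued in `[0, ∞]`. -/
def negEnergy (M : MarkovSystem K N E) (j0 : N) (xp : N → K) (σ : CodeSpace E) : ℝ≥0∞ :=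
  if σ ∈ M.codeDomain j0 xp then
    (σ 1).elim ⊤ fun e =>
      if M.p e (M.code j0 xp σ) = 0 then ⊤
      else ENNReal.ofReal (-Real.log (M.p e (M.code j0 xp σ)))
  else ⊤

/-- The free energy `h_S(Λ) + ∫ u dΛ`, as an extended real number. -/
def freeEnergy (M : MarkovSystem K N E) (j0 : N) (xp : N → K)
    (Λ : Measure (CodeSpace E)) : EReal :=
  (entropyS Λ : EReal) - ((∫⁻ σ, M.negEnergy j0 xp σ ∂Λ : ℝ≥0∞) : EReal)

/-- `Λ₀ ∈ E(u)`: `Λ₀` is a thermodynamic equilibrium state for the energy function `u`. -/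
def IsEquilibriumForU (M : MarkovSystem K N E) (j0 : N) (xp : N → K)
    (Λ0 : Measure (CodeSpace E)) : Prop :=
  IsProbabilityMeasure Λ0 ∧ Measure.map (shiftMap E) Λ0 = Λ0 ∧ entropyS Λ0 ≠ ⊤ ∧
    M.freeEnergy j0 xp Λ0 =
      sSup {r : EReal | ∃ Λ : Measure (CodeSpace E),
        IsProbabilityMeasure Λ ∧ Measure.map (shiftMap E) Λ = Λ ∧ entropyS Λ ≠ ⊤ ∧
          r = M.freeEnergy j0 xp Λ}

end MarkovSystem

end

namespace MarkovSystem

section Words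

variable {K : Type*} [MetricSpace K] [MeasurableSpace K] {N E : Type*}

/-- `w_{e_n} ∘ ⋯ ∘ w_{e_1}` for the word `[e_1, …, e_n]`. -/
def wcomp (M : MarkovSystem K N E) : List (Option E) → K → K
  | [], x => x
  | o :: es, x => M.wcomp es (M.wext o x)

/-- The image of the base point `x_{i(e_1)}` under `w_{e_n} ∘ ⋯ ∘ w_{e_1}`. -/
def wordOrbit (M : MarkovSystem K N E) (j0 : N) (xp : N → K) (es : List (Option E)) : K :=
  M.wcomp es (xp (M.iext j0 (es.headD none)))

/-- The word `[σ_{1-n}, …, σ_0]`. -/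
def pastWord : ℕ → CodeSpace E → List (Option E)
  | 0, _ => []
  | n + 1, σ => σ (-(n : ℤ)) :: pastWord n σ

/-- The expectation of `H` over words of length `n` chosen with probabilities `wordProb · x`. -/
noncomputable def wordExp (M : MarkovSystem K N E) (n : ℕ) (H : List (Option E) → ℝ≥0∞) (x : K) : ℝ≥0∞ :=
  ∑' es : List (Option E),
    if es.length = n then ENNReal.ofReal (M.wordProb es x) * H es else 0

variable (M : MarkovSystem K N E) (j0 : N) (xp : N → K)

@[simp] lemma wext_some (e : E) : M.wext (some e) = M.w e := rfl

@[simp] lemma pext_some (e : E) : M.pext (some e) = M.p e := rfl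

@[simp] lemma pext_none (x : K) : M.pext none x = 0 := rfl

lemma pext_nonneg (o : Option E) (x : K) : 0 ≤ M.pext o x := by
  cases o with
  | none => exact le_rfl
  | some e => exact M.p_nonneg e x

lemma wordProb_nonneg (es : List (Option E)) (x : K) : 0 ≤ M.wordProb es x := by
  induction es generalizing x with
  | nil => exact zero_le_one
  | cons o es ih => exact mul_nonneg (M.pext_nonneg o x) (ih _)

lemma measurable_wext (o : Option E) : Measurable (M.wext o) := by
  cases o with
  | none => exact measurable_id
  | some e => exact M.w_measurable e

lemma measurable_pext (o : Option E) : Measurable (M.pext o) := by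
  cases o with
  | none => exact measurable_const
  | some e => exact M.p_measurable e

lemma measurable_wcomp (es : List (Option E)) : Measurable (M.wcomp es) := by
  induction es with
  | nil => exact measurable_id
  | cons o es ih => exact ih.comp (M.measurable_wext o)

lemma measurable_wordProb (es : List (Option E)) : Measurable (M.wordProb es) := by
  induction es with
  | nil => exact measurable_const
  | cons o es ih => exact (M.measurable_pext o).mul (ih.comp (M.measurable_wext o))

lemma wcomp_append_singleton (es : List (Option E)) (o : Option E) (x : K) :
    M.wcomp (es ++ [o]) x = M.wext o (M.wcomp es x) := by
  induction es generalizing x with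
  | nil => rfl
  | cons o' es ih => exact ih _

lemma wordProb_append_singleton (es : List (Option E)) (o : Option E) (x : K) :
    M.wordProb (es ++ [o]) x = M.wordProb es x * M.pext o (M.wcomp es x) := by
  induction es generalizing x with
  | nil => simp [wordProb, wcomp]
  | cons o' es ih => simp [wordProb, wcomp, ih, mul_assoc]

lemma exists_mem_Kset (x : K) : ∃ j, x ∈ M.Kset j :=
  Set.mem_iUnion.1 (M.Kset_cover ▸ Set.mem_univ x)

lemma Kset_index_unique {x : K} {j j' : N} (h : x ∈ M.Kset j) (h' : x ∈ M.Kset j') : j = j' := by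
  by_contra hne
  exact Set.disjoint_left.1 (M.Kset_disjoint hne) h h'

lemma mem_Kset_of_p_ne_zero {e : E} {x : K} (h : M.p e x ≠ 0) : x ∈ M.Kset (M.i e) :=
  by_contra fun hx => h (M.p_zero_outside e x hx)

lemma exists_some_of_pext_ne_zero {o : Option E} {x : K} (h : M.pext o x ≠ 0) :
    ∃ e, o = some e ∧ x ∈ M.Kset (M.i e) := by
  cases o with
  | none => exact absurd rfl h
  | some e => exact ⟨e, rfl, M.mem_Kset_of_p_ne_zero h⟩

lemma exists_common_Kset_wcomp {es : List (Option E)} {x y : K} {j : N}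
    (h : M.wordProb es x ≠ 0) (hx : x ∈ M.Kset j) (hy : y ∈ M.Kset j) :
    ∃ j', M.wcomp es x ∈ M.Kset j' ∧ M.wcomp es y ∈ M.Kset j' := by
  induction es generalizing x y j with
  | nil => exact ⟨j, hx, hy⟩
  | cons o es ih =>
    obtain ⟨e, rfl, he⟩ := M.exists_some_of_pext_ne_zero (left_ne_zero_of_mul h)
    obtain rfl := M.Kset_index_unique hx he
    exact ih (right_ne_zero_of_mul h) (M.w_mapsTo e hx) (M.w_mapsTo e hy)

lemma wcomp_append_mem_Kset {es : List (Option E)} {e : E} {x : K}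
    (h : M.wordProb (es ++ [some e]) x ≠ 0) :
    M.wcomp (es ++ [some e]) x ∈ M.Kset (M.t e) := by
  rw [wordProb_append_singleton] at h
  rw [wcomp_append_singleton]
  exact M.w_mapsTo e (M.mem_Kset_of_p_ne_zero (right_ne_zero_of_mul h))

lemma iext_headD_eq {es : List (Option E)} (hes : es ≠ []) {x : K} {j : N}
    (h : M.wordProb es x ≠ 0) (hx : x ∈ M.Kset j) : M.iext j0 (es.headD none) = j := by
  cases es with
  | nil => exact absurd rfl hes
  | cons o es =>
    obtain ⟨e, rfl, he⟩ := M.exists_some_of_pext_ne_zero (left_ne_zero_of_mul h)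
    exact M.Kset_index_unique he hx

lemma wordOrbit_mem_Kset (hxp : ∀ j, xp j ∈ M.Kset j) {es : List (Option E)} {e : E} {x : K}
    (h : M.wordProb (es ++ [some e]) x ≠ 0) :
    M.wordOrbit j0 xp (es ++ [some e]) ∈ M.Kset (M.t e) := by
  obtain ⟨j, hx⟩ := M.exists_mem_Kset x
  have hj := M.iext_headD_eq j0 (by simp) h hx
  obtain ⟨j', h1, h2⟩ := M.exists_common_Kset_wcomp h hx (hxp j)
  obtain rfl := M.Kset_index_unique h1 (M.wcomp_append_mem_Kset h)
  rwa [wordOrbit, hj]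

@[simp] lemma length_pastWord (n : ℕ) (σ : CodeSpace E) : (pastWord n σ).length = n := by
  induction n with
  | zero => rfl
  | succ n ih => simp [pastWord, ih]

lemma drop_pastWord (n m : ℕ) (σ : CodeSpace E) :
    (pastWord (n + m) σ).drop n = pastWord m σ := by
  induction n with
  | zero => simp
  | succ n ih => rw [Nat.add_right_comm]; exact ih

lemma iterW_eq_wcomp_pastWord (σ : CodeSpace E) (n : ℕ) (y : K) :
    M.iterW σ n y = M.wcomp (pastWord (n + 1) σ) y := by
  induction n generalizing y with
  | zero => simp [iterW, pastWord, wcomp]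
  | succ n ih =>
    rw [iterW, ih]
    simp [pastWord, wcomp]

lemma orbit_eq_wordOrbit (σ : CodeSpace E) (n : ℕ) :
    M.orbit j0 xp σ n = M.wordOrbit j0 xp (pastWord (n + 1) σ) :=
  M.iterW_eq_wcomp_pastWord σ n _

lemma cylSetL_cons (m : ℤ) (o : Option E) (es : List (Option E)) :
    cylSetL m (o :: es) = {σ | σ m = o} ∩ cylSetL (m + 1) es := by
  ext σ
  constructor
  · intro h
    refine ⟨by simpa using h 0 (by simp), fun k hk => ?_⟩
    have := h (k + 1) (by simpa using hk)
    simpa [add_assoc, add_comm (1 : ℤ)] using this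
  · rintro ⟨h0, h⟩ k hk
    cases k with
    | zero => simpa using h0
    | succ k =>
      have := h k (by simpa using hk)
      simpa [add_assoc, add_comm (1 : ℤ)] using this

@[simp] lemma cylSetL_nil (m : ℤ) : cylSetL m ([] : List (Option E)) = Set.univ := by
  ext σ
  simp [cylSetL]

lemma cylSetL_append_singleton (m : ℤ) (es : List (Option E)) (o : Option E) :
    cylSetL m (es ++ [o]) = cylSetL m es ∩ {σ | σ (m + es.length) = o} := by
  induction es generalizing m with
  | nil => simp [cylSetL_cons]
  | cons o' es ih =>
    rw [List.cons_append, cylSetL_cons, ih, cylSetL_cons, Set.inter_assoc]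
    simp [add_assoc, add_comm (1 : ℤ)]

lemma cylSetL_eq_pastWord (es : List (Option E)) :
    cylSetL (1 - (es.length : ℤ)) es = {σ | pastWord es.length σ = es} := by
  induction es with
  | nil => simp [pastWord]
  | cons o es ih =>
    rw [cylSetL_cons]
    have h1 : (1 - ((o :: es).length : ℤ)) = -(es.length : ℤ) := by
      simp
    have h2 : -(es.length : ℤ) + 1 = 1 - es.length := by ring
    rw [h1, h2, ih]
    ext σ
    simp [pastWord]

lemma preimage_shiftMap_cylSetL (m : ℤ) (es : List (Option E)) :
    shiftMap E ⁻¹' cylSetL m es = cylSetL (m + 1) es := by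
  ext σ
  simp [cylSetL, shiftMap, add_right_comm]

lemma pastWord_shiftMap (n : ℕ) (σ : CodeSpace E) :
    pastWord (n + 1) (shiftMap E σ) = pastWord n σ ++ [σ 1] := by
  induction n with
  | zero => simp [pastWord, shiftMap]
  | succ n ih =>
    rw [pastWord, ih, pastWord]
    simp [shiftMap]

end Words

section WordExp

variable {K : Type*} [MetricSpace K] [MeasurableSpace K] {N E : Type*}
variable (M : MarkovSystem K N E) (j0 : N) (xp : N → K)

lemma wordExp_zero (H : List (Option E) → ℝ≥0∞) (x : K) : M.wordExp 0 H x = H [] := by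
  rw [wordExp, tsum_eq_single []]
  · simp [wordProb]
  · intro es hes
    simp [hes]

lemma wordExp_succ (n : ℕ) (H : List (Option E) → ℝ≥0∞) (x : K) :
    M.wordExp (n + 1) H x = ∑' o : Option E,
      ENNReal.ofReal (M.pext o x) * M.wordExp n (fun es => H (o :: es)) (M.wext o x) := by
  have hinj : Function.Injective fun q : Option E × List (Option E) => q.1 :: q.2 := by
    rintro ⟨o, es⟩ ⟨o', es'⟩ h
    simpa using h
  rw [wordExp, ← hinj.tsum_eq, ENNReal.tsum_prod']
  · refine tsum_congr fun o => ?_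
    rw [wordExp, ← ENNReal.tsum_mul_left]
    refine tsum_congr fun es => ?_
    by_cases h : es.length = n
    · simp [h, wordProb, ENNReal.ofReal_mul (M.pext_nonneg o x), mul_assoc]
    · simp [h]
  · intro es hes
    cases es with
    | nil => simp at hes
    | cons o es => exact ⟨(o, es), rfl⟩

lemma wordExp_mono {n : ℕ} {H H' : List (Option E) → ℝ≥0∞} {x : K}
    (h : ∀ es, es.length = n → M.wordProb es x ≠ 0 → H es ≤ H' es) :
    M.wordExp n H x ≤ M.wordExp n H' x := by
  refine ENNReal.tsum_le_tsum fun es => ?_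
  by_cases hl : es.length = n
  · by_cases h0 : M.wordProb es x = 0
    · simp [h0]
    · simpa [hl] using by gcongr; exact h es hl h0
  · simp [hl]

lemma wordExp_add (n : ℕ) (H H' : List (Option E) → ℝ≥0∞) (x : K) :
    M.wordExp n (fun es => H es + H' es) x = M.wordExp n H x + M.wordExp n H' x := by
  rw [wordExp, wordExp, wordExp, ← ENNReal.tsum_add]
  refine tsum_congr fun es => ?_
  split_ifs <;> simp [mul_add]

lemma wordExp_const_mul (n : ℕ) (c : ℝ≥0∞) (H : List (Option E) → ℝ≥0∞) (x : K) :
    M.wordExp n (fun es => c * H es) x = c * M.wordExp n H x := by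
  rw [wordExp, wordExp, ← ENNReal.tsum_mul_left]
  refine tsum_congr fun es => ?_
  split_ifs
  · ring
  · simp

lemma measurable_wordExp [Countable E] (n : ℕ) {H : List (Option E) → K → ℝ≥0∞}
    (hH : ∀ es, Measurable (H es)) : Measurable fun x => M.wordExp n (fun es => H es x) x := by
  refine Measurable.tsum fun es => ?_
  split_ifs
  · exact (M.measurable_wordProb es).ennreal_ofReal.mul (hH es)
  · exact measurable_const

lemma tsum_pext_eq (x : K) (g : Option E → ℝ≥0∞) {j : N} (hx : x ∈ M.Kset j) :
    ∑' o : Option E, ENNReal.ofReal (M.pext o x) * g o =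
      ∑' e : {e : E // M.i e = j}, ENNReal.ofReal (M.p e.val x) * g (some e.val) := by
  have hinj : Function.Injective fun e : {e : E // M.i e = j} => some e.val :=
    fun e e' h => Subtype.ext (Option.some_injective _ h)
  rw [← hinj.tsum_eq]
  · rfl
  · intro o ho
    obtain ⟨e, rfl, he⟩ := M.exists_some_of_pext_ne_zero (o := o) (x := x) (by
      intro h
      simp [h] at ho)
    exact ⟨⟨e, M.Kset_index_unique he hx⟩, rfl⟩

lemma markovOp_eq_tsum_pext (f : K → ℝ≥0∞) (x : K) :
    M.markovOp f x = ∑' o : Option E, ENNReal.ofReal (M.pext o x) * f (M.wext o x) := by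
  rw [markovOp, ← (Option.some_injective E).tsum_eq]
  · rfl
  · intro o ho
    cases o with
    | none => simp at ho
    | some e => exact ⟨e, rfl⟩

lemma tsum_pext_one (x : K) : ∑' o : Option E, ENNReal.ofReal (M.pext o x) = 1 := by
  obtain ⟨j, hx⟩ := M.exists_mem_Kset x
  have h := M.tsum_pext_eq x (fun _ => 1) hx
  simp only [mul_one] at h
  have hs : Summable fun e : {e : E // M.i e = j} => M.p e.val x := by
    by_contra hns
    have := M.p_tsum_one j x hx
    rw [tsum_eq_zero_of_not_summable hns] at this
    exact zero_ne_one this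
  rw [h, ← ENNReal.ofReal_tsum_of_nonneg (fun e => M.p_nonneg _ _) hs, M.p_tsum_one j x hx,
    ENNReal.ofReal_one]

lemma wordExp_const (n : ℕ) (c : ℝ≥0∞) (x : K) : M.wordExp n (fun _ => c) x = c := by
  induction n generalizing x with
  | zero => rw [wordExp_zero]
  | succ n ih =>
    simp_rw [wordExp_succ, ih, ENNReal.tsum_mul_right, tsum_pext_one, one_mul]

lemma wordExp_drop (n m : ℕ) (h : List (Option E) → ℝ≥0∞) (f : K → ℝ≥0∞) (x : K) :
    M.wordExp (n + m) (fun es => h (es.drop n) * f (M.wcomp es x)) x =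
      M.markovOp^[n] (fun z => M.wordExp m (fun es => h es * f (M.wcomp es z)) z) x := by
  induction n generalizing x with
  | zero => simp
  | succ n ih =>
    rw [Nat.add_right_comm, wordExp_succ, Function.iterate_succ_apply', markovOp_eq_tsum_pext]
    refine tsum_congr fun o => ?_
    rw [← ih]
    rfl

lemma wordExp_indicator_singleton (es₀ : List (Option E)) (F : List (Option E) → ℝ≥0∞) (x : K) :
    M.wordExp es₀.length (fun es => (if es = es₀ then 1 else 0) * F es) x =
      ENNReal.ofReal (M.wordProb es₀ x) * F es₀ := by
  rw [wordExp, tsum_eq_single es₀]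
  · simp
  · intro es hes
    simp [hes]

variable {M} {a : ℝ}

lemma IsContractive.tsum_edist_le (ha : 0 ≤ a) (hcon : M.IsContractive a) {j : N} {x y : K}
    (hx : x ∈ M.Kset j) (hy : y ∈ M.Kset j) :
    ∑' o : Option E, ENNReal.ofReal (M.pext o x) * edist (M.wext o x) (M.wext o y) ≤
      ENNReal.ofReal a * edist x y := by
  rw [M.tsum_pext_eq x (fun o => edist (M.wext o x) (M.wext o y)) hx]
  have := hcon j x hx y hy
  simpa only [wext_some, ENNReal.ofReal_mul ha, ENNReal.ofReal_mul (M.p_nonneg _ _), ← edist_dist]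
    using this

lemma IsContractive.wordExp_edist_wcomp_le (ha : 0 ≤ a) (hcon : M.IsContractive a) (n : ℕ)
    {j : N} {x y : K} (hx : x ∈ M.Kset j) (hy : y ∈ M.Kset j) :
    M.wordExp n (fun es => edist (M.wcomp es x) (M.wcomp es y)) x ≤
      ENNReal.ofReal a ^ n * edist x y := by
  induction n generalizing x y j with
  | zero => simp [wordExp_zero, wcomp]
  | succ n ih =>
    rw [wordExp_succ]
    calc _ ≤ ∑' o : Option E, ENNReal.ofReal a ^ n *
          (ENNReal.ofReal (M.pext o x) * edist (M.wext o x) (M.wext o y)) := by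
          refine ENNReal.tsum_le_tsum fun o => ?_
          by_cases h0 : M.pext o x = 0
          · simp [h0]
          obtain ⟨e, rfl, he⟩ := M.exists_some_of_pext_ne_zero h0
          obtain rfl := M.Kset_index_unique he hx
          rw [mul_left_comm]
          gcongr
          exact ih (M.w_mapsTo e hx) (M.w_mapsTo e hy)
      _ ≤ _ := by
          rw [ENNReal.tsum_mul_left, pow_succ, mul_assoc]
          gcongr
          exact hcon.tsum_edist_le ha hx hy

variable (M)

lemma Lfun_eq {x : K} {j : N} (hx : x ∈ M.Kset j) : M.Lfun xp x = edist x (xp j) := by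
  rw [Lfun, tsum_eq_single j]
  · simp [hx, edist_dist]
  · intro j' hj'
    exact Set.indicator_of_notMem (fun h => hj' (M.Kset_index_unique h hx)) _

lemma Lfun_ne_top (x : K) : M.Lfun xp x ≠ ⊤ := by
  obtain ⟨j, hx⟩ := M.exists_mem_Kset x
  rw [M.Lfun_eq xp hx]
  exact edist_ne_top _ _

lemma measurable_Lfun [OpensMeasurableSpace K] [Countable N] : Measurable (M.Lfun xp) :=
  Measurable.tsum fun j =>
    ((continuous_id.dist continuous_const).measurable.ennreal_ofReal).indicator
      (M.Kset_measurable j)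

variable {M}

lemma IsContractive.wordExp_edist_wordOrbit_le (hxp : ∀ j, xp j ∈ M.Kset j) (ha : 0 ≤ a)
    (hcon : M.IsContractive a) (n : ℕ) (x : K) :
    M.wordExp (n + 1) (fun es => edist (M.wcomp es x) (M.wordOrbit j0 xp es)) x ≤
      ENNReal.ofReal a ^ (n + 1) * M.Lfun xp x := by
  obtain ⟨j, hx⟩ := M.exists_mem_Kset x
  rw [M.Lfun_eq xp hx]
  refine le_trans (M.wordExp_mono fun es hl h0 => ?_)
    (hcon.wordExp_edist_wcomp_le ha (n + 1) hx (hxp j))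
  rw [wordOrbit, M.iext_headD_eq j0 (by rintro rfl; simp at hl) h0 hx]

lemma IsContractive.markovOp_Lfun_le (hxp : ∀ j, xp j ∈ M.Kset j) (ha : 0 ≤ a)
    (hcon : M.IsContractive a) (x : K) :
    M.markovOp (M.Lfun xp) x ≤ ENNReal.ofReal a * M.Lfun xp x + M.bConst xp := by
  obtain ⟨j, hx⟩ := M.exists_mem_Kset x
  have hb : ∑' o : Option E, ENNReal.ofReal (M.pext o x) *
      o.elim 0 (fun e => edist (M.w e (xp (M.i e))) (xp (M.t e))) ≤ M.bConst xp := by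
    rw [M.tsum_pext_eq x _ hx]
    refine le_trans (le_of_eq ?_) (le_iSup_of_le j (le_iSup₂_of_le x hx le_rfl))
    refine tsum_congr fun e => ?_
    rw [ENNReal.ofReal_mul (M.p_nonneg _ _), ← edist_dist]
    rfl
  rw [markovOp_eq_tsum_pext, M.Lfun_eq xp hx]
  refine le_trans ?_ (add_le_add (hcon.tsum_edist_le ha hx (hxp j)) hb)
  rw [← ENNReal.tsum_add]
  refine ENNReal.tsum_le_tsum fun o => ?_
  by_cases h0 : M.pext o x = 0
  · simp [h0]
  obtain ⟨e, rfl, he⟩ := M.exists_some_of_pext_ne_zero h0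
  obtain rfl := M.Kset_index_unique he hx
  rw [← mul_add, wext_some, M.Lfun_eq xp (M.w_mapsTo e hx)]
  gcongr
  exact edist_triangle _ _ _

end WordExp

end MarkovSystem

namespace MarkovSystem

section Transfer

variable {K : Type*} [MetricSpace K] [MeasurableSpace K] {N E : Type*}
variable (M : MarkovSystem K N E) (xp : N → K)

lemma markovOp_mono {f g : K → ℝ≥0∞} (h : ∀ x, f x ≤ g x) (x : K) :
    M.markovOp f x ≤ M.markovOp g x :=
  ENNReal.tsum_le_tsum fun e => by gcongr; exact h _

lemma markovOp_affine (c d : ℝ≥0∞) (f : K → ℝ≥0∞) (x : K) :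
    M.markovOp (fun y => c * f y + d) x = c * M.markovOp f x + d := by
  simp_rw [markovOp_eq_tsum_pext, mul_add, ENNReal.tsum_add, ENNReal.tsum_mul_right, tsum_pext_one,
    one_mul, mul_left_comm _ c, ENNReal.tsum_mul_left]

variable [Countable E]

lemma measurable_markovOp {f : K → ℝ≥0∞} (hf : Measurable f) : Measurable (M.markovOp f) :=
  Measurable.tsum fun e => (M.p_measurable e).ennreal_ofReal.mul (hf.comp (M.w_measurable e))

lemma measurable_iterate_markovOp (n : ℕ) {f : K → ℝ≥0∞} (hf : Measurable f) :
    Measurable (M.markovOp^[n] f) := by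
  induction n with
  | zero => exact hf
  | succ n ih =>
    rw [Function.iterate_succ_apply']
    exact M.measurable_markovOp ih

lemma lintegral_adjOp (μ : Measure K) {f : K → ℝ≥0∞} (hf : Measurable f) :
    ∫⁻ x, f x ∂(M.adjOp μ) = ∫⁻ x, M.markovOp f x ∂μ := by
  have hm : ∀ e, Measurable fun x => ENNReal.ofReal (M.p e x) :=
    fun e => (M.p_measurable e).ennreal_ofReal
  simp only [adjOp, markovOp]
  rw [lintegral_sum_measure, lintegral_tsum]
  · refine tsum_congr fun e => ?_
    rw [lintegral_map hf (M.w_measurable e)]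
    exact lintegral_withDensity_eq_lintegral_mul μ (hm e) (hf.comp (M.w_measurable e))
  · exact fun e => ((hm e).mul (hf.comp (M.w_measurable e))).aemeasurable

variable {M} {μ : Measure K}

lemma IsInvariantMeasure.lintegral_iterate_markovOp (hμ : M.IsInvariantMeasure μ) (n : ℕ)
    {f : K → ℝ≥0∞} (hf : Measurable f) : ∫⁻ x, M.markovOp^[n] f x ∂μ = ∫⁻ x, f x ∂μ := by
  induction n with
  | zero => rfl
  | succ n ih =>
    rw [Function.iterate_succ_apply', ← M.lintegral_adjOp μ (M.measurable_iterate_markovOp n hf),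
      hμ.2, ih]

variable [OpensMeasurableSpace K] [Countable N] {a : ℝ}

lemma IsContractive.lintegral_Lfun_ne_top (hxp : ∀ j, xp j ∈ M.Kset j) (ha0 : 0 ≤ a) (ha1 : a < 1)
    (hcon : M.IsContractive a) (hb : M.bConst xp ≠ ⊤) (hμ : M.IsInvariantMeasure μ) :
    ∫⁻ x, M.Lfun xp x ∂μ ≠ ⊤ := by
  have := hμ.1
  set r := ENNReal.ofReal a with hr
  have hr1 : r < 1 := by simpa [hr] using ha1
  set L := M.Lfun xp
  have hL : Measurable L := M.measurable_Lfun xp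
  set C := M.bConst xp * ∑' k : ℕ, r ^ k with hC
  have hCtop : C ≠ ⊤ := by
    refine ENNReal.mul_ne_top hb ?_
    rw [ENNReal.tsum_geometric]
    exact ENNReal.inv_ne_top.2 (tsub_pos_of_lt hr1).ne'
  have hiter : ∀ (R : ℝ≥0∞) (n : ℕ) (x : K), M.markovOp^[n] (fun x => min (L x) R) x ≤
      min (r ^ n * L x + M.bConst xp * ∑ k ∈ Finset.range n, r ^ k) R := by
    intro R n
    induction n with
    | zero => simp
    | succ n ih =>
      intro x
      rw [Function.iterate_succ_apply']
      refine le_min ?_ ?_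
      · refine (M.markovOp_mono (fun y => (ih y).trans (min_le_left _ _)) x).trans ?_
        rw [M.markovOp_affine, Finset.sum_range_succ, mul_add, pow_succ]
        calc _ ≤ r ^ n * (r * L x + M.bConst xp) +
              M.bConst xp * ∑ k ∈ Finset.range n, r ^ k := by
              gcongr
              exact hcon.markovOp_Lfun_le xp hxp ha0 x
          _ = _ := by ring
      · refine (M.markovOp_mono (g := fun y => 0 * L y + R)
          (fun y => by simpa using (ih y).trans (min_le_right _ _)) x).trans ?_
        rw [M.markovOp_affine]
        simp
  have hbound : ∀ R : ℕ, ∫⁻ x, min (L x) R ∂μ ≤ C := by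
    intro R
    have hlim : Tendsto (fun n => ∫⁻ x, min (r ^ n * L x + C) R ∂μ) atTop
        (𝓝 (∫⁻ _, min C (R : ℝ≥0∞) ∂μ)) := by
      refine tendsto_lintegral_of_dominated_convergence (fun _ => (R : ℝ≥0∞))
        (fun n => ((hL.const_mul _).add_const _).min measurable_const)
        (fun n => .of_forall fun x => min_le_right _ _) (by simp) (.of_forall fun x => ?_)
      refine Tendsto.min ?_ tendsto_const_nhds
      have h0 : Tendsto (fun n => r ^ n * L x) atTop (𝓝 (0 * L x)) :=
        ENNReal.Tendsto.mul_const (ENNReal.tendsto_pow_atTop_nhds_zero_of_lt_one hr1)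
          (.inr (M.Lfun_ne_top xp x))
      simpa using h0.add_const C
    refine (ge_of_tendsto' hlim fun n => ?_).trans (by simp)
    rw [← hμ.lintegral_iterate_markovOp n (hL.min measurable_const)]
    refine lintegral_mono fun x => (hiter R n x).trans ?_
    rw [hC]
    gcongr
    exact ENNReal.sum_le_tsum _
  have hsup : ∀ x, L x = ⨆ R : ℕ, min (L x) R := by
    intro x
    rw [← inf_iSup_eq, ENNReal.iSup_natCast, inf_top_eq]
  refine ne_top_of_le_ne_top hCtop ?_
  rw [lintegral_congr hsup, lintegral_iSup (fun R => hL.min measurable_const)]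
  · exact iSup_le hbound
  · intro R R' h x
    exact min_le_min le_rfl (by exact_mod_cast h)

end Transfer

section Past

variable {E : Type*}

lemma measurableSet_coord (n : ℤ) (s : Set (Option E)) :
    MeasurableSet {σ : CodeSpace E | σ n ∈ s} :=
  measurable_pi_apply n (MeasurableSpace.measurableSet_top (s := s))

lemma measurable_shiftMap : Measurable (shiftMap E) :=
  measurable_pi_lambda _ fun _ => measurable_pi_apply _

lemma measurableSet_cylSetL (m : ℤ) (es : List (Option E)) : MeasurableSet (cylSetL m es) := by
  induction es generalizing m with
  | nil => simp
  | cons o es ih =>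
    rw [cylSetL_cons]
    exact (measurableSet_coord m {o}).inter (ih _)

lemma pastAlgebra_le : pastAlgebra E ≤ MeasurableSpace.pi := by
  refine MeasurableSpace.generateFrom_le ?_
  rintro _ ⟨es, -, rfl⟩
  exact measurableSet_cylSetL _ _

lemma measurableSet_pastWord_eq (n : ℕ) (es : List (Option E)) :
    MeasurableSet[pastAlgebra E] {σ | pastWord (n + 1) σ = es} := by
  by_cases h : es.length = n + 1
  · refine MeasurableSpace.measurableSet_generateFrom ⟨es, ?_, ?_⟩
    · rintro rfl
      simp at h
    · rw [cylSetL_eq_pastWord, h]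
  · convert MeasurableSet.empty
    ext σ
    simp only [Set.mem_ofPred_eq, Set.mem_empty_iff_false, iff_false]
    rintro rfl
    simp at h

variable [Countable E]

lemma measurable_comp_pastWord {β : Type*} [MeasurableSpace β] (n : ℕ)
    (H : List (Option E) → β) :
    Measurable[pastAlgebra E] fun σ : CodeSpace E => H (pastWord (n + 1) σ) := by
  intro s _
  have : (fun σ : CodeSpace E => H (pastWord (n + 1) σ)) ⁻¹' s =
      ⋃ es : H ⁻¹' s, {σ | pastWord (n + 1) σ = es.1} := by
    ext σ
    simp
  rw [this]
  exact MeasurableSet.iUnion fun es => measurableSet_pastWord_eq n es.1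

end Past

section Coding

variable {K : Type*} [MetricSpace K] [MeasurableSpace K] {N E : Type*}
variable (M : MarkovSystem K N E) (j0 : N) (xp : N → K)

lemma tendsto_orbit_code {σ : CodeSpace E} (h : σ ∈ M.codeDomain j0 xp) :
    Tendsto (fun n => M.orbit j0 xp σ n) atTop (𝓝 (M.code j0 xp σ)) := by
  rw [code, dif_pos h]
  exact h.2.choose_spec

lemma orbit_mem_Kset (hxp : ∀ j, xp j ∈ M.Kset j) {σ : CodeSpace E} (hσ : σ ∈ M.pathSpace)
    {e : E} (he : σ 0 = some e) (n : ℕ) : M.orbit j0 xp σ n ∈ M.Kset (M.t e) := by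
  have key : ∀ (n : ℕ) (e' : E) (y : K), σ (-(n : ℤ)) = some e' → y ∈ M.Kset (M.i e') →
      M.iterW σ n y ∈ M.Kset (M.t e) := by
    intro n
    induction n with
    | zero =>
      intro e' y h hy
      obtain rfl : e = e' := by simpa [he] using h
      rw [iterW, he]
      exact M.w_mapsTo e hy
    | succ n ih =>
      intro e' y h hy
      obtain ⟨e₁, e₂, h1, h2, h12⟩ := hσ (-((n + 1 : ℕ) : ℤ))
      obtain rfl : e₁ = e' := Option.some_injective _ (h1.symm.trans h)
      rw [show -((n + 1 : ℕ) : ℤ) + 1 = -(n : ℤ) by push_cast; ring] at h2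
      push_cast at h
      rw [iterW, h]
      exact ih e₂ _ h2 (h12 ▸ M.w_mapsTo e₁ hy)
  obtain ⟨e', -, h, -⟩ := hσ (-(n : ℤ))
  refine key n e' _ h ?_
  rw [h]
  exact hxp _

lemma wext_orbit (σ : CodeSpace E) (n : ℕ) :
    M.wext (σ 1) (M.orbit j0 xp σ n) = M.orbit j0 xp (shiftMap E σ) (n + 1) := by
  rw [orbit_eq_wordOrbit, orbit_eq_wordOrbit, pastWord_shiftMap, wordOrbit, wordOrbit,
    wcomp_append_singleton]
  rfl

lemma measurableSet_pathSpace [Countable E] : MeasurableSet M.pathSpace := by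
  have : M.pathSpace = ⋂ n : ℤ, ⋃ e : E, ⋃ e' : E, ⋃ _ : M.i e' = M.t e,
      {σ | σ n ∈ ({some e} : Set (Option E))} ∩ {σ | σ (n + 1) ∈ ({some e'} : Set (Option E))} := by
    ext σ
    simp only [pathSpace, Set.mem_ofPred_eq, Set.mem_iInter, Set.mem_iUnion, Set.mem_inter_iff,
      Set.mem_singleton_iff, exists_prop]
    refine forall_congr' fun n => exists_congr fun e => exists_congr fun e' => ?_
    tauto
  rw [this]
  exact MeasurableSet.iInter fun n => MeasurableSet.iUnion fun e => MeasurableSet.iUnion fun e' =>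
    MeasurableSet.iUnion fun _ => (measurableSet_coord _ _).inter (measurableSet_coord _ _)

variable [Countable E] [BorelSpace K]

lemma stronglyMeasurable_orbit (n : ℕ) :
    StronglyMeasurable[pastAlgebra E] fun σ => M.orbit j0 xp σ n := by
  simp_rw [orbit_eq_wordOrbit]
  refine stronglyMeasurable_iff_measurable_separable.2
    ⟨measurable_comp_pastWord n (M.wordOrbit j0 xp), ?_⟩
  refine (Set.Countable.mono ?_ (Set.countable_range (M.wordOrbit j0 xp))).isSeparable
  rintro _ ⟨σ, rfl⟩
  exact ⟨_, rfl⟩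

variable [CompleteSpace K]

lemma measurableSet_codeDomain : MeasurableSet (M.codeDomain j0 xp) :=
  M.measurableSet_pathSpace.inter
    (pastAlgebra_le _ (@StronglyMeasurable.measurableSet_exists_tendsto _ _ _ (pastAlgebra E) _ _ _ _ _ _
      fun n => M.stronglyMeasurable_orbit j0 xp n))

lemma exists_measurable_eqOn_code : ∃ F : CodeSpace E → K, Measurable[pastAlgebra E] F ∧
    ∀ σ ∈ M.codeDomain j0 xp, F σ = M.code j0 xp σ := by
  have : Nonempty K := ⟨xp j0⟩
  refine ⟨fun σ => limUnder atTop fun n => M.orbit j0 xp σ n,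
    (@StronglyMeasurable.limUnder _ _ _ (pastAlgebra E) _ _ _ _ _ _ _
      fun n => M.stronglyMeasurable_orbit j0 xp n).measurable,
    fun σ hσ => (M.tendsto_orbit_code j0 xp hσ).limUnder_eq⟩

end Coding

end MarkovSystem

namespace MarkovSystem

section ShiftInvariance

variable {E : Type*} {Λ : Measure (CodeSpace E)}

lemma measure_cylSetL_eq (hΛ : Measure.map (shiftMap E) Λ = Λ) (m m' : ℤ)
    (es : List (Option E)) : Λ (cylSetL m es) = Λ (cylSetL m' es) := by
  have hstep : ∀ k : ℤ, Λ (cylSetL (k + 1) es) = Λ (cylSetL k es) := fun k => by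
    conv_rhs => rw [← hΛ]
    rw [Measure.map_apply measurable_shiftMap (measurableSet_cylSetL k es),
      preimage_shiftMap_cylSetL]
  have hzero : ∀ k : ℤ, Λ (cylSetL k es) = Λ (cylSetL 0 es) := fun k => by
    induction k using Int.induction_on with
    | zero => rfl
    | succ k ih => rw [hstep, ih]
    | pred k ih => rw [← hstep, sub_add_cancel, ih]
  rw [hzero, ← hzero m']

variable [Countable E]

lemma lintegral_eq_tsum_pastWord (n : ℕ) (g : CodeSpace E → ℝ≥0∞) :
    ∫⁻ σ, g σ ∂Λ = ∑' es, ∫⁻ σ in {σ | pastWord (n + 1) σ = es}, g σ ∂Λ := by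
  have hm : ∀ es, MeasurableSet {σ : CodeSpace E | pastWord (n + 1) σ = es} :=
    fun es => pastAlgebra_le _ (measurableSet_pastWord_eq n es)
  rw [← lintegral_iUnion hm]
  · have : ⋃ es, {σ : CodeSpace E | pastWord (n + 1) σ = es} = Set.univ := by
      ext σ
      simp
    rw [this, Measure.restrict_univ]
  · intro es es' hne
    rw [Function.onFun, Set.disjoint_left]
    rintro σ rfl h
    exact hne h

lemma lintegral_comp_pastWord (n : ℕ) (H : List (Option E) → ℝ≥0∞) :
    ∫⁻ σ, H (pastWord (n + 1) σ) ∂Λ = ∑' es, H es * Λ {σ | pastWord (n + 1) σ = es} := by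
  rw [lintegral_eq_tsum_pastWord n]
  refine tsum_congr fun es => ?_
  rw [setLIntegral_congr_fun (g := fun _ => H es)
    (pastAlgebra_le _ (measurableSet_pastWord_eq n es)), setLIntegral_const]
  rintro σ rfl
  rfl

end ShiftInvariance

section Phi

variable {K : Type*} [MetricSpace K] [MeasurableSpace K] {N E : Type*}
variable {M : MarkovSystem K N E} (j0 : N) (xp : N → K) {μ : Measure K} {Λ : Measure (CodeSpace E)}

lemma IsPhiOf.measure_cylSetL (hΦ : M.IsPhiOf μ Λ) (m : ℤ) (es : List (Option E)) :
    Λ (cylSetL m es) = ∫⁻ x, ENNReal.ofReal (M.wordProb es x) ∂μ :=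
  (measure_cylSetL_eq hΦ.2.1 m 0 es).trans (hΦ.2.2 0 le_rfl es)

variable [Countable E]

lemma IsPhiOf.lintegral_comp_pastWord (hΦ : M.IsPhiOf μ Λ) (n : ℕ)
    (H : List (Option E) → ℝ≥0∞) :
    ∫⁻ σ, H (pastWord (n + 1) σ) ∂Λ = ∫⁻ x, M.wordExp (n + 1) H x ∂μ := by
  have hm : ∀ es, Measurable fun x => ENNReal.ofReal (M.wordProb es x) :=
    fun es => (M.measurable_wordProb es).ennreal_ofReal
  rw [MarkovSystem.lintegral_comp_pastWord]
  simp only [wordExp]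
  rw [lintegral_tsum]
  · refine tsum_congr fun es => ?_
    by_cases hl : es.length = n + 1
    · simp only [hl, if_true]
      rw [← hl, ← cylSetL_eq_pastWord, hΦ.measure_cylSetL, lintegral_mul_const _ (hm es), mul_comm]
    · have : {σ : CodeSpace E | pastWord (n + 1) σ = es} = ∅ := by
        ext σ
        simp only [Set.mem_ofPred_eq, Set.mem_empty_iff_false, iff_false]
        rintro rfl
        simp at hl
      simp [hl, this]
  · intro es
    split_ifs
    · exact ((hm es).mul_const _).aemeasurable
    · exact aemeasurable_const

lemma IsPhiOf.ae_mem_pathSpace (hΦ : M.IsPhiOf μ Λ) : ∀ᵐ σ ∂Λ, σ ∈ M.pathSpace := by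
  have h : ∀ᵐ σ ∂Λ, ∀ (n : ℤ) (o o' : Option E), (∀ x, M.wordProb [o, o'] x = 0) →
      σ ∉ cylSetL n [o, o'] := by
    refine ae_all_iff.2 fun n => ae_all_iff.2 fun o => ae_all_iff.2 fun o' => ?_
    by_cases h0 : ∀ x, M.wordProb [o, o'] x = 0
    · have : Λ (cylSetL n [o, o']) = 0 := by simp [hΦ.measure_cylSetL, h0]
      filter_upwards [measure_eq_zero_iff_ae_notMem.1 this] with σ hσ _ using hσ
    · exact .of_forall fun σ h => absurd h h0
  filter_upwards [h] with σ hσ n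
  have := mt (hσ n (σ n) (σ (n + 1))) (by simp [cylSetL_cons])
  push Not at this
  obtain ⟨x, hx⟩ := this
  obtain ⟨e, he, hxe⟩ := M.exists_some_of_pext_ne_zero (left_ne_zero_of_mul hx)
  obtain ⟨e', he', hxe'⟩ := M.exists_some_of_pext_ne_zero
    (left_ne_zero_of_mul (right_ne_zero_of_mul hx))
  refine ⟨e, e', he, he', ?_⟩
  rw [he] at hxe'
  exact M.Kset_index_unique hxe' (M.w_mapsTo e hxe)

variable {a : ℝ}

lemma IsPhiOf.lintegral_edist_orbit_le [OpensMeasurableSpace K] [Countable N]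
    (hxp : ∀ j, xp j ∈ M.Kset j) (ha0 : 0 ≤ a)
    (hcon : M.IsContractive a) (hμ : M.IsInvariantMeasure μ) (hΦ : M.IsPhiOf μ Λ) (n : ℕ) :
    ∫⁻ σ, edist (M.orbit j0 xp σ n) (M.orbit j0 xp σ (n + 1)) ∂Λ ≤
      (ENNReal.ofReal a ^ (n + 1) + ENNReal.ofReal a ^ (n + 2)) * ∫⁻ x, M.Lfun xp x ∂μ := by
  set r := ENNReal.ofReal a
  have hL : Measurable (M.Lfun xp) := M.measurable_Lfun xp
  have horb : ∀ σ : CodeSpace E, edist (M.orbit j0 xp σ n) (M.orbit j0 xp σ (n + 1)) =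
      (fun es => edist (M.wordOrbit j0 xp es.tail) (M.wordOrbit j0 xp es))
        (pastWord (n + 1 + 1) σ) := fun σ => by
    rw [M.orbit_eq_wordOrbit, M.orbit_eq_wordOrbit]
    rfl
  have hpt : ∀ x, M.wordExp (n + 1 + 1)
      (fun es => edist (M.wordOrbit j0 xp es.tail) (M.wordOrbit j0 xp es)) x ≤
      M.markovOp (fun z => r ^ (n + 1) * M.Lfun xp z) x + r ^ (n + 2) * M.Lfun xp x := by
    intro x
    refine (M.wordExp_mono (H' := fun es => edist (M.wcomp es x) (M.wordOrbit j0 xp es.tail) +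
      edist (M.wcomp es x) (M.wordOrbit j0 xp es))
      fun es _ _ => edist_triangle_left _ _ _).trans ?_
    rw [M.wordExp_add]
    refine add_le_add ?_ (hcon.wordExp_edist_wordOrbit_le j0 xp hxp ha0 (n + 1) x)
    rw [wordExp_succ, markovOp_eq_tsum_pext]
    refine ENNReal.tsum_le_tsum fun o => ?_
    gcongr
    exact hcon.wordExp_edist_wordOrbit_le j0 xp hxp ha0 n (M.wext o x)
  calc _ = _ := lintegral_congr horb
    _ = _ := hΦ.lintegral_comp_pastWord (n + 1)
      fun es => edist (M.wordOrbit j0 xp es.tail) (M.wordOrbit j0 xp es)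
    _ ≤ _ := lintegral_mono hpt
    _ = _ := by
      rw [lintegral_add_right _ (hL.const_mul _),
        show ∫⁻ x, M.markovOp (fun z => r ^ (n + 1) * M.Lfun xp z) x ∂μ = _ from
          hμ.lintegral_iterate_markovOp 1 (hL.const_mul _),
        lintegral_const_mul _ hL, lintegral_const_mul _ hL, add_mul]

lemma IsPhiOf.ae_mem_codeDomain [CompleteSpace K] [BorelSpace K] [Countable N]
    (hxp : ∀ j, xp j ∈ M.Kset j) (ha0 : 0 ≤ a) (ha1 : a < 1) (hcon : M.IsContractive a)
    (hb : M.bConst xp ≠ ⊤) (hμ : M.IsInvariantMeasure μ) (hΦ : M.IsPhiOf μ Λ) :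
    ∀ᵐ σ ∂Λ, σ ∈ M.codeDomain j0 xp := by
  set r := ENNReal.ofReal a with hr
  have hr1 : r < 1 := by simpa [hr] using ha1
  have hm : ∀ n, Measurable fun σ => edist (M.orbit j0 xp σ n) (M.orbit j0 xp σ (n + 1)) :=
    fun n => (((M.stronglyMeasurable_orbit j0 xp n).mono pastAlgebra_le).edist
      ((M.stronglyMeasurable_orbit j0 xp (n + 1)).mono pastAlgebra_le)).measurable
  have hgeom : ∑' n : ℕ, r ^ n ≠ ⊤ := by
    rw [ENNReal.tsum_geometric]
    exact ENNReal.inv_ne_top.2 (tsub_pos_of_lt hr1).ne'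
  have hsum : ∫⁻ σ, ∑' n, edist (M.orbit j0 xp σ n) (M.orbit j0 xp σ (n + 1)) ∂Λ ≠ ⊤ := by
    rw [lintegral_tsum fun n => (hm n).aemeasurable]
    refine ne_top_of_le_ne_top ?_ (ENNReal.tsum_le_tsum fun n =>
      hΦ.lintegral_edist_orbit_le j0 xp hxp ha0 hcon hμ n)
    rw [ENNReal.tsum_mul_right]
    refine ENNReal.mul_ne_top ?_ (hcon.lintegral_Lfun_ne_top xp hxp ha0 ha1 hb hμ)
    simp_rw [pow_succ, mul_assoc, ENNReal.tsum_add, ENNReal.tsum_mul_right]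
    simp only [ne_eq, ENNReal.add_eq_top, not_or]
    constructor <;> refine ENNReal.mul_ne_top hgeom ?_ <;> simp [ENNReal.mul_eq_top]
  filter_upwards [hΦ.ae_mem_pathSpace, ae_lt_top (Measurable.tsum hm) hsum] with σ hσ hfin
  exact ⟨hσ, cauchySeq_tendsto_of_complete
    (cauchySeq_of_edist_le_of_tsum_ne_top _ (fun n => le_rfl) hfin.ne)⟩

end Phi

end MarkovSystem

namespace MarkovSystem

section Limit

variable {K : Type*} [MetricSpace K] [MeasurableSpace K] {N E : Type*}
variable {M : MarkovSystem K N E} (j0 : N) (xp : N → K) {μ : Measure K} {Λ : Measure (CodeSpace E)}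
  {a : ℝ}

lemma pastWord_append_singleton_eq {l : List (Option E)} {o : Option E} {σ : CodeSpace E}
    (h : pastWord (l.length + 1) σ = l ++ [o]) : σ 0 = o := by
  have h1 := drop_pastWord l.length 1 σ
  rw [h] at h1
  simpa [pastWord, eq_comm] using h1

lemma IsPhiOf.measure_append_none [Countable E] (hΦ : M.IsPhiOf μ Λ) (l : List (Option E)) :
    Λ {σ | pastWord (l.length + 1) σ = l ++ [none]} = 0 := by
  refine measure_mono_null (t := {σ | σ ∉ M.pathSpace}) (fun σ hσ hp => ?_)
    (ae_iff.1 hΦ.ae_mem_pathSpace)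
  obtain ⟨e, -, he, -⟩ := hp 0
  rw [pastWord_append_singleton_eq hσ] at he
  cases he

lemma IsContractive.wordExp_le_of_modulus (hxp : ∀ j, xp j ∈ M.Kset j) (ha0 : 0 ≤ a)
    (hcon : M.IsContractive a) (n : ℕ) (x : K) {G H : List (Option E) → ℝ≥0∞} {ε C : ℝ≥0∞}
    (h : ∀ es, es.length = n + 1 → M.wordProb es x ≠ 0 →
      G es ≤ H es + (ε + C * edist (M.wcomp es x) (M.wordOrbit j0 xp es))) :
    M.wordExp (n + 1) G x ≤
      M.wordExp (n + 1) H x + (ε + C * (ENNReal.ofReal a ^ (n + 1) * M.Lfun xp x)) := by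
  refine (M.wordExp_mono h).trans ?_
  rw [M.wordExp_add, M.wordExp_add, M.wordExp_const, M.wordExp_const_mul]
  gcongr
  exact hcon.wordExp_edist_wordOrbit_le j0 xp hxp ha0 n x

variable [CompleteSpace K] [BorelSpace K] [Countable N] [Countable E]

lemma IsPhiOf.setLIntegral_code (hxp : ∀ j, xp j ∈ M.Kset j) (ha0 : 0 ≤ a) (ha1 : a < 1)
    (hcon : M.IsContractive a) (hb : M.bConst xp ≠ ⊤) (hμ : M.IsInvariantMeasure μ)
    (hΦ : M.IsPhiOf μ Λ) (l : List (Option E)) (e : E) {f f' : K → ℝ≥0∞} (hf : Measurable f)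
    (hf1 : ∀ x, f x ≤ 1)
    (hmod : ∀ ε : ℝ≥0, 0 < ε → ∃ C : ℝ≥0, ∀ x ∈ M.Kset (M.t e), ∀ y ∈ M.Kset (M.t e),
      f x ≤ f y + (ε + C * edist x y))
    (hlim : ∀ (u : ℕ → K) (z : K), (∀ n, u n ∈ M.Kset (M.t e)) → Tendsto u atTop (𝓝 z) →
      Tendsto (fun n => f (u n)) atTop (𝓝 (f' z))) :
    ∫⁻ σ in {σ | pastWord (l.length + 1) σ = l ++ [some e]}, f' (M.code j0 xp σ) ∂Λ =
      ∫⁻ x, ENNReal.ofReal (M.wordProb (l ++ [some e]) x) * f (M.wcomp (l ++ [some e]) x) ∂μ := by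
  have := hμ.1
  have := hΦ.1
  set k := l.length with hk
  set w := l ++ [some e] with hw
  have hwl : w.length = k + 1 := by simp [hw, hk]
  set r := ENNReal.ofReal a with hr
  have hr1 : r < 1 := by simpa [hr] using ha1
  have hL : Measurable (M.Lfun xp) := M.measurable_Lfun xp
  have hI := hcon.lintegral_Lfun_ne_top xp hxp ha0 ha1 hb hμ
  set I := ∫⁻ x, M.Lfun xp x ∂μ with hIdef
  let ind : List (Option E) → ℝ≥0∞ := fun es => if es = w then 1 else 0
  let H : ℕ → List (Option E) → ℝ≥0∞ := fun n es => ind (es.drop n) * f (M.wordOrbit j0 xp es)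
  let G : ℕ → K → List (Option E) → ℝ≥0∞ := fun n x es => ind (es.drop n) * f (M.wcomp es x)
  set A := ∫⁻ σ in {σ | pastWord (k + 1) σ = w}, f' (M.code j0 xp σ) ∂Λ with hA
  set B := ∫⁻ x, ENNReal.ofReal (M.wordProb w x) * f (M.wcomp w x) ∂μ with hB
  have hHm : ∀ n, Measurable fun x => M.wordExp (n + k + 1) (H n) x :=
    fun n => M.measurable_wordExp _ fun es => measurable_const
  have hGm : ∀ n, Measurable fun x => M.wordExp (n + k + 1) (G n x) x :=
    fun n => M.measurable_wordExp _ (H := fun es x => G n x es) fun es =>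
      (hf.comp (M.measurable_wcomp es)).const_mul _
  have hGB : ∀ n, ∫⁻ x, M.wordExp (n + k + 1) (G n x) x ∂μ = B := by
    intro n
    have h1 : ∀ x, M.wordExp (n + k + 1) (G n x) x = M.markovOp^[n]
        (fun z => M.wordExp (k + 1) (fun es => ind es * f (M.wcomp es z)) z) x :=
      fun x => M.wordExp_drop n (k + 1) ind f x
    rw [lintegral_congr h1, hμ.lintegral_iterate_markovOp n (M.measurable_wordExp _
      (H := fun es z => ind es * f (M.wcomp es z))
      fun es => (hf.comp (M.measurable_wcomp es)).const_mul _), hB]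
    refine lintegral_congr fun x => ?_
    rw [← hwl]
    exact M.wordExp_indicator_singleton w (fun es => f (M.wcomp es x)) x
  have hword : ∀ (n : ℕ) (x : K) (es : List (Option E)), M.wordProb es x ≠ 0 → es.drop n = w →
      M.wcomp es x ∈ M.Kset (M.t e) ∧ M.wordOrbit j0 xp es ∈ M.Kset (M.t e) := by
    intro n x es h0 hes
    have : es = (es.take n ++ l) ++ [some e] := by
      rw [List.append_assoc, ← hw, ← hes, List.take_append_drop]
    rw [this] at h0 ⊢
    exact ⟨M.wcomp_append_mem_Kset h0, M.wordOrbit_mem_Kset j0 xp hxp h0⟩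
  have herr : ∀ (ε C : ℝ≥0∞) (n : ℕ),
      ∫⁻ x, (ε + C * (r ^ (n + k + 1) * M.Lfun xp x)) ∂μ = ε + C * r ^ (n + k + 1) * I := by
    intro ε C n
    rw [lintegral_add_left measurable_const, lintegral_const_mul _ (hL.const_mul _),
      lintegral_const_mul _ hL]
    simp [mul_assoc, hIdef]
  have hHA : Tendsto (fun n => ∫⁻ x, M.wordExp (n + k + 1) (H n) x ∂μ) atTop (𝓝 A) := by
    simp_rw [← fun n => hΦ.lintegral_comp_pastWord (n + k) (H n)]
    rw [hA, ← lintegral_indicator (pastAlgebra_le _ (measurableSet_pastWord_eq k w))]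
    refine tendsto_lintegral_of_dominated_convergence (fun _ => 1)
      (fun n => (measurable_comp_pastWord (n + k) (H n)).mono pastAlgebra_le le_rfl)
      (fun n => .of_forall fun σ => ?_) (by simp) ?_
    · change ind _ * f _ ≤ 1
      refine mul_le_one' ?_ (hf1 _)
      simp only [ind]
      split_ifs <;> simp
    · filter_upwards [hΦ.ae_mem_codeDomain j0 xp hxp ha0 ha1 hcon hb hμ] with σ hσ
      have hdrop : ∀ n, (pastWord (n + k + 1) σ).drop n = pastWord (k + 1) σ :=
        fun n => drop_pastWord n (k + 1) σ
      simp only [H, ind, hdrop, ← M.orbit_eq_wordOrbit j0 xp]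
      by_cases h : pastWord (k + 1) σ = w
      · simp only [h, if_true, one_mul, Set.indicator, Set.mem_ofPred_eq]
        refine hlim (fun n => M.orbit j0 xp σ (n + k)) _ (fun n => ?_)
          ((tendsto_add_atTop_iff_nat k).2 (M.tendsto_orbit_code j0 xp hσ))
        exact M.orbit_mem_Kset j0 xp hxp hσ.1 (pastWord_append_singleton_eq h) _
      · simp [h]
  have herr0 : ∀ ε C : ℝ≥0, Tendsto (fun n => (ε : ℝ≥0∞) + C * r ^ (n + k + 1) * I) atTop
      (𝓝 ε) := by
    intro ε C
    have h0 : Tendsto (fun n : ℕ => r ^ (n + k + 1)) atTop (𝓝 0) :=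
      (tendsto_add_atTop_iff_nat (k + 1)).2
        (ENNReal.tendsto_pow_atTop_nhds_zero_of_lt_one hr1)
    have h1 := ENNReal.Tendsto.mul_const (b := I)
      (ENNReal.Tendsto.const_mul (a := (C : ℝ≥0∞)) h0 (.inr ENNReal.coe_ne_top)) (.inr hI)
    simpa using h1.const_add (ε : ℝ≥0∞)
  refine le_antisymm ?_ ?_
  · refine ENNReal.le_of_forall_pos_le_add fun ε hε _ => ?_
    obtain ⟨C, hC⟩ := hmod ε hε
    refine le_of_tendsto_of_tendsto' hHA ((herr0 ε C).const_add B) fun n => ?_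
    rw [← herr, ← hGB n, ← lintegral_add_left (hGm n)]
    refine lintegral_mono fun x => hcon.wordExp_le_of_modulus j0 xp hxp ha0 _ x
      fun es _ h0 => ?_
    by_cases hes : es.drop n = w
    · obtain ⟨h1, h2⟩ := hword n x es h0 hes
      simpa [H, G, ind, hes, edist_comm] using hC _ h2 _ h1
    · simp [H, ind, hes]
  · refine ENNReal.le_of_forall_pos_le_add fun ε hε _ => ?_
    obtain ⟨C, hC⟩ := hmod ε hε
    refine ge_of_tendsto' (hHA.add (herr0 ε C)) fun n => ?_
    rw [← herr, ← hGB n, ← lintegral_add_left (hHm n)]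
    refine lintegral_mono fun x => hcon.wordExp_le_of_modulus j0 xp hxp ha0 _ x
      fun es _ h0 => ?_
    by_cases hes : es.drop n = w
    · obtain ⟨h1, h2⟩ := hword n x es h0 hes
      simpa [H, G, ind, hes] using hC _ h1 _ h2
    · simp [G, ind, hes]

end Limit

end MarkovSystem

namespace MarkovSystem

section PastMeasures

variable {E : Type*} [Countable E]

lemma lintegral_eq_of_measure_pastWord_eq {Λ₁ Λ₂ : Measure (CodeSpace E)} [IsFiniteMeasure Λ₁]
    (h : ∀ (n : ℕ) (es : List (Option E)), es.length = n + 1 →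
      Λ₁ {σ | pastWord (n + 1) σ = es} = Λ₂ {σ | pastWord (n + 1) σ = es})
    {g : CodeSpace E → ℝ≥0∞} (hg : Measurable[pastAlgebra E] g) :
    ∫⁻ σ, g σ ∂Λ₁ = ∫⁻ σ, g σ ∂Λ₂ := by
  have h' : ∀ es : List (Option E),
      Λ₁ {σ | pastWord (0 + 1) σ = es} = Λ₂ {σ | pastWord (0 + 1) σ = es} := by
    intro es
    by_cases hl : es.length = 0 + 1
    · exact h 0 es hl
    · have : {σ : CodeSpace E | pastWord (0 + 1) σ = es} = ∅ := by
        ext σ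
        simp only [Set.mem_ofPred_eq, Set.mem_empty_iff_false, iff_false]
        rintro rfl
        simp at hl
      simp [this]
  have huniv : Λ₁ Set.univ = Λ₂ Set.univ := by
    have h1 := lintegral_comp_pastWord (Λ := Λ₁) 0 fun _ => 1
    have h2 := lintegral_comp_pastWord (Λ := Λ₂) 0 fun _ => 1
    simp only [h', lintegral_one, one_mul] at h1 h2
    rw [h1, h2]
  have : Λ₁.trim pastAlgebra_le = Λ₂.trim pastAlgebra_le := by
    have : IsFiniteMeasure (Λ₁.trim (pastAlgebra_le (E := E))) := isFiniteMeasure_trim _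
    refine @ext_of_generate_finite _ (pastAlgebra E) _ _ _ rfl ?_ this ?_ ?_
    · have key : ∀ es es' : List (Option E), es.length ≤ es'.length → es' ≠ [] →
          (cylSetL (1 - (es.length : ℤ)) es ∩ cylSetL (1 - (es'.length : ℤ)) es').Nonempty →
          cylSetL (1 - (es.length : ℤ)) es ∩ cylSetL (1 - (es'.length : ℤ)) es' =
            cylSetL (1 - (es'.length : ℤ)) es' := by
        intro es es' hle _ hne
        simp only [cylSetL_eq_pastWord] at hne ⊢
        obtain ⟨τ, h1, h2⟩ := hne
        simp only [Set.mem_ofPred_eq] at h1 h2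
        refine Set.inter_eq_right.2 fun σ hσ => ?_
        simp only [Set.mem_ofPred_eq] at hσ ⊢
        have hd := fun σ : CodeSpace E => drop_pastWord (es'.length - es.length) es.length σ
        rw [Nat.sub_add_cancel hle] at hd
        have hτ := hd τ
        rw [h2, h1] at hτ
        rw [← hd, hσ, hτ]
      rintro _ ⟨es, hes, rfl⟩ _ ⟨es', hes', rfl⟩ hne
      rcases le_total es.length es'.length with hle | hle
      · exact ⟨es', hes', key es es' hle hes' hne⟩
      · rw [Set.inter_comm] at hne ⊢
        exact ⟨es, hes, key es' es hle hes hne⟩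
    · rintro _ ⟨es, hes, rfl⟩
      have hm : MeasurableSet[pastAlgebra E] (cylSetL (1 - (es.length : ℤ)) es) :=
        MeasurableSpace.measurableSet_generateFrom ⟨es, hes, rfl⟩
      rw [trim_measurableSet_eq _ hm, trim_measurableSet_eq _ hm, cylSetL_eq_pastWord]
      obtain ⟨n, hn⟩ := Nat.exists_eq_succ_of_ne_zero (List.length_pos_iff.2 hes).ne'
      rw [hn]
      exact h n es hn
    · rw [trim_measurableSet_eq _ MeasurableSet.univ, trim_measurableSet_eq _ MeasurableSet.univ,
        huniv]
  rw [← lintegral_trim pastAlgebra_le hg, ← lintegral_trim pastAlgebra_le hg, this]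

end PastMeasures

section MapCode

variable {K : Type*} [MetricSpace K] [CompleteSpace K] [MeasurableSpace K] [BorelSpace K]
  {N E : Type*} [Countable E]
variable {M : MarkovSystem K N E} (j0 : N) (xp : N → K) {μ : Measure K} {Λ : Measure (CodeSpace E)}
  {a : ℝ}

lemma aemeasurable_code (h : ∀ᵐ σ ∂Λ, σ ∈ M.codeDomain j0 xp) :
    AEMeasurable (M.code j0 xp) Λ := by
  obtain ⟨F, hF, hFc⟩ := M.exists_measurable_eqOn_code j0 xp
  exact ⟨F, hF.mono pastAlgebra_le le_rfl, h.mono fun σ hσ => (hFc σ hσ).symm⟩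

variable [Countable N]

lemma IsPhiOf.lintegral_code (hxp : ∀ j, xp j ∈ M.Kset j) (ha0 : 0 ≤ a) (ha1 : a < 1)
    (hcon : M.IsContractive a) (hb : M.bConst xp ≠ ⊤) (hμ : M.IsInvariantMeasure μ)
    (hΦ : M.IsPhiOf μ Λ) {f : K → ℝ≥0∞} (hf : Continuous f) (hf1 : ∀ x, f x ≤ 1) {C : ℝ≥0}
    (hC : ∀ x y, f x ≤ f y + C * edist x y) :
    ∫⁻ σ, f (M.code j0 xp σ) ∂Λ = ∫⁻ x, f x ∂μ := by
  have hword : ∀ x, M.markovOp f x = M.wordExp 1 (fun es => f (M.wcomp es x)) x := by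
    intro x
    rw [wordExp_succ, markovOp_eq_tsum_pext]
    simp_rw [wordExp_zero]
    rfl
  have hm : ∀ es, Measurable fun x => ENNReal.ofReal (M.wordProb es x) * f (M.wcomp es x) :=
    fun es => (M.measurable_wordProb es).ennreal_ofReal.mul
      (hf.measurable.comp (M.measurable_wcomp es))
  rw [← hμ.lintegral_iterate_markovOp 1 hf.measurable, Function.iterate_one, lintegral_congr hword,
    lintegral_eq_tsum_pastWord 0]
  simp only [wordExp]
  rw [lintegral_tsum fun es => by
    split_ifs
    exacts [(hm es).aemeasurable, aemeasurable_const]]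
  refine tsum_congr fun es => ?_
  by_cases hl : es.length = 1
  · obtain ⟨o, rfl⟩ := List.length_eq_one_iff.1 hl
    simp only [hl, if_true]
    cases o with
    | none =>
      exact (setLIntegral_measure_zero _ _ (hΦ.measure_append_none [])).trans
        (by simp [wordProb])
    | some e =>
      refine hΦ.setLIntegral_code j0 xp hxp ha0 ha1 hcon hb hμ [] e hf.measurable hf1
        (fun ε _ => ⟨C, fun x _ y _ => (hC x y).trans (by gcongr; exact le_add_self)⟩)
        (fun u z _ hu => (hf.tendsto z).comp hu)
  · have : {σ : CodeSpace E | pastWord (0 + 1) σ = es} = ∅ := by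
      ext σ
      simp only [Set.mem_ofPred_eq, Set.mem_empty_iff_false, iff_false]
      rintro rfl
      simp at hl
    simp [hl, this]

lemma IsPhiOf.map_code (hxp : ∀ j, xp j ∈ M.Kset j) (ha0 : 0 ≤ a) (ha1 : a < 1)
    (hcon : M.IsContractive a) (hb : M.bConst xp ≠ ⊤) (hμ : M.IsInvariantMeasure μ)
    (hΦ : M.IsPhiOf μ Λ) : Measure.map (M.code j0 xp) Λ = μ := by
  have := hμ.1
  have := hΦ.1
  have hcode := aemeasurable_code j0 xp
    (hΦ.ae_mem_codeDomain j0 xp hxp ha0 ha1 hcon hb hμ)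
  have := Measure.isProbabilityMeasure_map hcode
  refine ext_of_generate_finite _ (BorelSpace.measurable_eq.trans borel_eq_generateFrom_isClosed)
    isPiSystem_isClosed (fun s hs => ?_) (by simp)
  have hδ : ∀ n : ℕ, (0 : ℝ) < 1 / (n + 1) := fun n => Nat.one_div_pos_of_nat
  refine tendsto_nhds_unique
    (tendsto_lintegral_thickenedIndicator_of_isClosed _ hs hδ tendsto_one_div_add_atTop_nhds_zero_nat)
    (Tendsto.congr (fun n => ?_)
    (tendsto_lintegral_thickenedIndicator_of_isClosed _ hs hδ tendsto_one_div_add_atTop_nhds_zero_nat))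
  have hcont : Continuous fun x => (thickenedIndicator (hδ n) s x : ℝ≥0∞) :=
    ENNReal.continuous_coe.comp (thickenedIndicator (hδ n) s).continuous
  rw [lintegral_map' hcont.measurable.aemeasurable hcode]
  obtain ⟨C, hC⟩ : ∃ C, LipschitzWith C (thickenedIndicator (hδ n) s) :=
    ⟨_, lipschitzWith_thickenedIndicator (hδ n) s⟩
  refine (hΦ.lintegral_code j0 xp hxp ha0 ha1 hcon hb hμ hcont
    (fun x => by exact_mod_cast thickenedIndicator_le_one (hδ n) s x) (C := C)
    (fun x y => le_trans ?_ (add_le_add le_rfl (hC x y)))).symm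
  rw [edist_nndist]
  exact_mod_cast NNReal.le_add_nndist _ _

end MapCode

end MarkovSystem

namespace MarkovSystem

section Extension

lemma exists_modulus_of_uniformContinuousOn {K : Type*} [MetricSpace K] {s : Set K} {f : K → ℝ}
    (hf : UniformContinuousOn f s) (hf1 : ∀ x, f x ≤ 1) {ε : ℝ≥0} (hε : 0 < ε) :
    ∃ C : ℝ≥0, ∀ x ∈ s, ∀ y ∈ s,
      ENNReal.ofReal (f x) ≤ ENNReal.ofReal (f y) + (ε + C * edist x y) := by
  obtain ⟨δ, hδ, h⟩ := Metric.uniformContinuousOn_iff.1 hf ε hε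
  refine ⟨(δ⁻¹).toNNReal, fun x hx y hy => ?_⟩
  rcases lt_or_ge (dist x y) δ with hd | hd
  · have := (abs_lt.1 (h x hx y hy hd)).2
    calc ENNReal.ofReal (f x) ≤ ENNReal.ofReal (f y + ε) := by
          refine ENNReal.ofReal_le_ofReal ?_
          linarith
      _ ≤ ENNReal.ofReal (f y) + ENNReal.ofReal ε := ENNReal.ofReal_add_le
      _ = ENNReal.ofReal (f y) + ε := by rw [ENNReal.ofReal_coe_nnreal]
      _ ≤ _ := by
        gcongr
        exact le_self_add
  · calc ENNReal.ofReal (f x) ≤ ENNReal.ofReal (δ⁻¹ * dist x y) := by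
          refine ENNReal.ofReal_le_ofReal ((hf1 x).trans ?_)
          rwa [inv_mul_eq_div, one_le_div hδ]
      _ = (δ⁻¹).toNNReal * edist x y := by
          rw [ENNReal.ofReal_mul (by positivity), edist_dist]
          rfl
      _ ≤ _ := le_add_self.trans le_add_self

lemma inter_pastWord_append_eq {E : Type*} (l : List (Option E)) (o o' : Option E) :
    {σ : CodeSpace E | pastWord (l.length + 1) σ = l ++ [o]} ∩ {σ | σ 1 = o'} =
      cylSetL (1 - ((l ++ [o]).length : ℤ)) (l ++ [o] ++ [o']) := by
  rw [cylSetL_append_singleton, cylSetL_eq_pastWord]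
  simp

variable {K : Type*} [MetricSpace K] [MeasurableSpace K] {N E : Type*}
variable {M : MarkovSystem K N E} {pbar : E → K → ℝ}

lemma IsUCExtensionP.measurable [BorelSpace K] (hpbar : M.IsUCExtensionP pbar) (e : E) :
    Measurable (pbar e) := by
  obtain ⟨hc, -, h0⟩ := hpbar e
  convert hc.measurable_piecewise (continuousOn_const (c := (0 : ℝ)))
    isClosed_closure.measurableSet using 1
  ext x
  by_cases hx : x ∈ closure (M.Kset (M.i e))
  · simp [hx]
  · simp [hx, h0]

lemma IsUCExtensionP.mem_Icc (hpbar : M.IsUCExtensionP pbar) (e : E) (x : K) :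
    pbar e x ∈ Set.Icc (0 : ℝ) 1 := by
  obtain ⟨hc, hp, h0⟩ := hpbar e
  by_cases hx : x ∈ closure (M.Kset (M.i e))
  · refine closure_minimal ?_ isClosed_Icc (hc.image_closure ⟨x, hx, rfl⟩)
    rintro _ ⟨y, hy, rfl⟩
    rw [hp y hy]
    exact ⟨M.p_nonneg e y, M.p_le_one e y⟩
  · rw [h0 x hx]
    simp

lemma IsUCExtensionP.tendsto (hpbar : M.IsUCExtensionP pbar) (e : E) {u : ℕ → K} {z : K}
    (hu : ∀ n, u n ∈ M.Kset (M.i e)) (hz : Tendsto u atTop (𝓝 z)) :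
    Tendsto (fun n => M.p e (u n)) atTop (𝓝 (pbar e z)) := by
  obtain ⟨hc, hp, -⟩ := hpbar e
  have hzc : z ∈ closure (M.Kset (M.i e)) := mem_closure_of_tendsto hz (.of_forall hu)
  refine Tendsto.congr (fun n => hp _ (hu n)) ((hc z hzc).tendsto.comp
    (tendsto_nhdsWithin_iff.2 ⟨hz, .of_forall fun n => subset_closure (hu n)⟩))

end Extension

section Asymptotic

variable {K : Type*} [MetricSpace K] [CompleteSpace K] [MeasurableSpace K] [BorelSpace K]
  {N E : Type*} [Countable E]
variable {M : MarkovSystem K N E} (j0 : N) (xp : N → K) {μ : Measure K} {Λ : Measure (CodeSpace E)}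
  {a : ℝ} {pbar : E → K → ℝ}

lemma aestronglyMeasurable_indicator_code (hpbar : M.IsUCExtensionP pbar)
    (h : ∀ᵐ σ ∂Λ, σ ∈ M.codeDomain j0 xp) (e : E) :
    AEStronglyMeasurable[pastAlgebra E]
      ((M.Tset (M.i e)).indicator fun σ => pbar e (M.code j0 xp σ)) Λ := by
  obtain ⟨F, hF, hFc⟩ := M.exists_measurable_eqOn_code j0 xp
  let s : Set (CodeSpace E) := {σ | ∃ e₀, pastWord 1 σ = [some e₀] ∧ M.t e₀ = M.i e}
  have hs : MeasurableSet[pastAlgebra E] s := by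
    have : s = ⋃ e₀ : {e₀ // M.t e₀ = M.i e}, {σ | pastWord (0 + 1) σ = [some e₀.1]} := by
      ext σ
      simp [s, and_comm]
    rw [this]
    exact MeasurableSet.iUnion fun e₀ => measurableSet_pastWord_eq 0 _
  refine ⟨s.indicator fun σ => pbar e (F σ),
    (((hpbar.measurable e).comp hF).indicator hs).stronglyMeasurable, ?_⟩
  filter_upwards [h] with σ hσ
  have : σ ∈ M.Tset (M.i e) ↔ σ ∈ s := by
    simp [Tset, s, hσ.1, pastWord]
  simp only [Set.indicator, this, hFc σ hσ]

variable [Countable N]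

lemma IsPhiOf.measure_pastWord_eq_setLIntegral (hxp : ∀ j, xp j ∈ M.Kset j) (ha0 : 0 ≤ a)
    (ha1 : a < 1) (hcon : M.IsContractive a) (hb : M.bConst xp ≠ ⊤) (hμ : M.IsInvariantMeasure μ)
    (huc : M.IsUniformlyContinuous) (hpbar : M.IsUCExtensionP pbar)
    (hΦ : M.IsPhiOf μ Λ) (e : E) (l : List (Option E)) (o : Option E) :
    Λ ({σ | pastWord (l.length + 1) σ = l ++ [o]} ∩ {σ | σ 1 = some e}) =
      ∫⁻ σ in {σ | pastWord (l.length + 1) σ = l ++ [o]},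
        ENNReal.ofReal ((M.Tset (M.i e)).indicator (fun σ => pbar e (M.code j0 xp σ)) σ) ∂Λ := by
  have hms : MeasurableSet {σ : CodeSpace E | pastWord (l.length + 1) σ = l ++ [o]} :=
    pastAlgebra_le _ (measurableSet_pastWord_eq _ _)
  cases o with
  | none =>
    rw [setLIntegral_measure_zero _ _ (hΦ.measure_append_none l)]
    exact measure_mono_null Set.inter_subset_left (hΦ.measure_append_none l)
  | some e₀ =>
    rw [inter_pastWord_append_eq, hΦ.measure_cylSetL]
    by_cases hte : M.t e₀ = M.i e
    · have hcode := hΦ.setLIntegral_code j0 xp hxp ha0 ha1 hcon hb hμ l e₀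
        (f := fun x => ENNReal.ofReal (M.p e x)) (f' := fun x => ENNReal.ofReal (pbar e x))
        (M.p_measurable e).ennreal_ofReal
        (fun x => by simpa using M.p_le_one e x)
        (fun ε hε => by
          rw [hte]
          exact exists_modulus_of_uniformContinuousOn (huc e).2 (M.p_le_one e) hε)
        (fun u z hu hz => ENNReal.tendsto_ofReal (hpbar.tendsto e (hte ▸ hu) hz))
      refine Eq.trans ?_ (hcode.symm.trans ?_)
      · refine lintegral_congr fun x => ?_
        rw [wordProb_append_singleton, ENNReal.ofReal_mul (M.wordProb_nonneg _ _), pext_some]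
      · refine setLIntegral_congr_fun_ae hms ?_
        filter_upwards [hΦ.ae_mem_pathSpace] with σ hσ hmem
        rw [Set.indicator_of_mem (s := M.Tset (M.i e))]
        exact ⟨hσ, e₀, pastWord_append_singleton_eq hmem, hte⟩
    · trans 0
      · rw [lintegral_eq_zero_iff (M.measurable_wordProb _).ennreal_ofReal]
        refine .of_forall fun x => ?_
        suffices M.wordProb (l ++ [some e₀] ++ [some e]) x = 0 by
          simpa using congrArg ENNReal.ofReal this
        rw [wordProb_append_singleton]
        by_contra h0
        exact hte (M.Kset_index_unique (M.wcomp_append_mem_Kset (left_ne_zero_of_mul h0))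
          (M.mem_Kset_of_p_ne_zero (right_ne_zero_of_mul h0)))
      · symm
        rw [setLIntegral_congr_fun (g := fun _ => 0) hms, lintegral_zero]
        intro σ hσ
        simp only
        rw [Set.indicator_of_notMem, ENNReal.ofReal_zero]
        rintro ⟨-, e₁, he₁, ht⟩
        rw [pastWord_append_singleton_eq hσ] at he₁
        cases he₁
        exact hte ht

lemma IsPhiOf.isAsymptotic (hxp : ∀ j, xp j ∈ M.Kset j) (ha0 : 0 ≤ a)
    (ha1 : a < 1) (hcon : M.IsContractive a) (hb : M.bConst xp ≠ ⊤) (hμ : M.IsInvariantMeasure μ)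
    (huc : M.IsUniformlyContinuous) (hpbar : M.IsUCExtensionP pbar)
    (hΦ : M.IsPhiOf μ Λ) : M.IsAsymptotic j0 xp pbar Λ := by
  have := hΦ.1
  have hD := hΦ.ae_mem_codeDomain j0 xp hxp ha0 ha1 hcon hb hμ
  refine ⟨hΦ.1, hΦ.2.1, (mem_ae_iff_prob_eq_one (M.measurableSet_codeDomain j0 xp)).1 hD, fun e => ?_⟩
  set g := (M.Tset (M.i e)).indicator fun σ => pbar e (M.code j0 xp σ) with hg
  have hgm := aestronglyMeasurable_indicator_code j0 xp hpbar hD e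
  have hgm' : AEStronglyMeasurable g Λ := hgm.mono pastAlgebra_le
  have hg01 : ∀ σ, g σ ∈ Set.Icc (0 : ℝ) 1 := fun σ => by
    rw [hg, Set.indicator_apply]
    split_ifs
    · exact hpbar.mem_Icc e _
    · simp
  have hgi : Integrable g Λ := Integrable.of_bound hgm' 1 (.of_forall fun σ => by
    rw [Real.norm_of_nonneg (hg01 σ).1]
    exact (hg01 σ).2)
  have hm1 : MeasurableSet {σ : CodeSpace E | σ 1 = some e} := measurableSet_coord 1 {some e}
  have hset : ∀ s, MeasurableSet[pastAlgebra E] s →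
      Λ (s ∩ {σ | σ 1 = some e}) = ∫⁻ σ in s, ENNReal.ofReal (g σ) ∂Λ := by
    intro s hs
    have := lintegral_eq_of_measure_pastWord_eq (Λ₁ := Λ.restrict {σ | σ 1 = some e})
      (Λ₂ := Λ.withDensity fun σ => ENNReal.ofReal (g σ)) (fun n es hes => ?_)
      (g := s.indicator 1) (Measurable.indicator (@measurable_const _ _ _ (pastAlgebra E) 1) hs)
    · rw [lintegral_indicator_one (pastAlgebra_le _ hs),
        lintegral_indicator_one (pastAlgebra_le _ hs), Measure.restrict_apply (pastAlgebra_le _ hs),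
        withDensity_apply _ (pastAlgebra_le _ hs)] at this
      exact this
    · have hms := pastAlgebra_le _ (measurableSet_pastWord_eq n es)
      rw [Measure.restrict_apply hms, withDensity_apply _ hms]
      rcases List.eq_nil_or_concat' es with rfl | ⟨l, o, rfl⟩
      · simp at hes
      · obtain rfl : l.length = n := by simpa using hes
        exact hΦ.measure_pastWord_eq_setLIntegral j0 xp hxp ha0 ha1 hcon hb hμ huc hpbar e l o
  refine (ae_eq_condExp_of_forall_setIntegral_eq pastAlgebra_le
    ((integrable_const (1 : ℝ)).indicator hm1) (fun s _ _ => hgi.integrableOn)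
    (fun s hs _ => ?_) hgm).symm
  rw [integral_eq_lintegral_of_nonneg_ae (.of_forall fun σ => (hg01 σ).1) hgm'.restrict,
    ← hset s hs, setIntegral_indicator hm1, setIntegral_const]
  simp [measureReal_def]

end Asymptotic

end MarkovSystem

namespace MarkovSystem

section Equilibrium

variable {K : Type*} [MetricSpace K] [MeasurableSpace K] {N E : Type*}
variable {M : MarkovSystem K N E} (j0 : N) (xp : N → K) {Λ : Measure (CodeSpace E)}

lemma code_shiftMap (hxp : ∀ j, xp j ∈ M.Kset j) (huc : M.IsUniformlyContinuous)
    {σ : CodeSpace E} {e : E} (hσ : σ ∈ M.codeDomain j0 xp)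
    (hσ' : shiftMap E σ ∈ M.codeDomain j0 xp) (he : σ 1 = some e)
    (hcode : M.code j0 xp σ ∈ M.Kset (M.i e)) :
    M.code j0 xp (shiftMap E σ) = M.w e (M.code j0 xp σ) := by
  obtain ⟨e₀, e₁, h0, h1, h01⟩ := hσ.1 0
  obtain rfl : e₁ = e := Option.some_injective _ (h1.symm.trans he)
  have horb : ∀ n, M.orbit j0 xp σ n ∈ M.Kset (M.i e₁) := fun n =>
    h01 ▸ M.orbit_mem_Kset j0 xp hxp hσ.1 h0 n
  have hlim := ((huc e₁).1.continuousOn _ hcode).tendsto.comp (tendsto_nhdsWithin_iff.2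
    ⟨M.tendsto_orbit_code j0 xp hσ, .of_forall horb⟩)
  refine tendsto_nhds_unique
    ((M.tendsto_orbit_code j0 xp hσ').comp (tendsto_add_atTop_nat 1)) (hlim.congr fun n => ?_)
  have := M.wext_orbit j0 xp σ n
  rwa [he] at this

variable [CompleteSpace K] [BorelSpace K] [Countable E]

lemma IsEquilibrium.ae_mem_codeDomain (h : M.IsEquilibrium j0 xp Λ) :
    ∀ᵐ σ ∂Λ, σ ∈ M.codeDomain j0 xp :=
  have := h.1
  (mem_ae_iff_prob_eq_one (M.measurableSet_codeDomain j0 xp)).2 h.2.2.1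

lemma IsEquilibrium.setLIntegral_coord_one (h : M.IsEquilibrium j0 xp Λ) (e : E)
    {g : CodeSpace E → ℝ≥0∞} (hg : Measurable[pastAlgebra E] g) :
    ∫⁻ σ in {σ | σ 1 = some e}, g σ ∂Λ =
      ∫⁻ σ, ENNReal.ofReal (M.p e (M.code j0 xp σ)) * g σ ∂Λ := by
  have := h.1
  have hp : AEMeasurable (fun σ => M.p e (M.code j0 xp σ)) Λ :=
    (M.p_measurable e).comp_aemeasurable (aemeasurable_code j0 xp (h.ae_mem_codeDomain j0 xp))
  have hm1 : MeasurableSet {σ : CodeSpace E | σ 1 = some e} := measurableSet_coord 1 {some e}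
  refine Eq.trans ?_ (lintegral_withDensity_eq_lintegral_mul₀ hp.ennreal_ofReal
    (hg.mono pastAlgebra_le le_rfl).aemeasurable)
  refine lintegral_eq_of_measure_pastWord_eq (fun n es _ => ?_) hg
  have hms := measurableSet_pastWord_eq n es
  have hms' := pastAlgebra_le _ hms
  rw [Measure.restrict_apply hms', withDensity_apply _ hms']
  have key := setIntegral_condExp (μ := Λ) pastAlgebra_le
    ((integrable_const (1 : ℝ)).indicator hm1) hms
  rw [setIntegral_congr_ae hms' ((h.2.2.2 e).mono fun σ hσ _ => hσ), setIntegral_indicator hm1,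
    setIntegral_const, smul_eq_mul, mul_one, measureReal_def,
    integral_eq_lintegral_of_nonneg_ae (.of_forall fun σ => M.p_nonneg e _)
      hp.aestronglyMeasurable.restrict] at key
  refine ((ENNReal.toReal_eq_toReal_iff' ?_ (measure_ne_top _ _)).1 key).symm
  refine ((setLIntegral_le_lintegral _ _).trans_lt ((lintegral_mono (g := fun _ => 1)
    fun σ => ?_).trans_lt (by simp))).ne
  simpa using M.p_le_one e _

lemma IsEquilibrium.ae_code_shiftMap (hxp : ∀ j, xp j ∈ M.Kset j) (huc : M.IsUniformlyContinuous)
    (h : M.IsEquilibrium j0 xp Λ) (e : E) :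
    ∀ᵐ σ ∂Λ, σ 1 = some e → M.code j0 xp (shiftMap E σ) = M.w e (M.code j0 xp σ) := by
  have hD := h.ae_mem_codeDomain j0 xp
  have hD' : ∀ᵐ σ ∂Λ, shiftMap E σ ∈ M.codeDomain j0 xp := by
    refine ae_of_ae_map measurable_shiftMap.aemeasurable ?_
    rwa [h.2.1]
  obtain ⟨F, hF, hFc⟩ := M.exists_measurable_eqOn_code j0 xp
  have hm1 : MeasurableSet {σ : CodeSpace E | σ 1 = some e} := measurableSet_coord 1 {some e}
  have hs : MeasurableSet[pastAlgebra E] {σ | M.p e (F σ) = 0} :=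
    ((M.p_measurable e).comp hF) (measurableSet_singleton 0)
  have hzero := h.setLIntegral_coord_one j0 xp e (g := {σ | M.p e (F σ) = 0}.indicator 1)
    (Measurable.indicator (@measurable_const _ _ _ (pastAlgebra E) 1) hs)
  rw [lintegral_indicator_one (pastAlgebra_le _ hs), Measure.restrict_apply (pastAlgebra_le _ hs),
    lintegral_congr_ae (g := fun _ => 0), lintegral_zero] at hzero
  · filter_upwards [hD, hD', measure_eq_zero_iff_ae_notMem.1 hzero] with σ hσ hσ' hne he
    refine code_shiftMap j0 xp hxp huc hσ hσ' he (M.mem_Kset_of_p_ne_zero fun h0 => hne ⟨?_, he⟩)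
    rwa [← hFc σ hσ] at h0
  · filter_upwards [hD] with σ hσ
    by_cases h0 : M.p e (F σ) = 0
    · simp [← hFc σ hσ, h0]
    · simp [h0]

lemma IsEquilibrium.setLIntegral_comp_code (hxp : ∀ j, xp j ∈ M.Kset j)
    (huc : M.IsUniformlyContinuous) (h : M.IsEquilibrium j0 xp Λ) (es : List (Option E))
    {f : K → ℝ≥0∞} (hf : Measurable f) :
    ∫⁻ σ in {σ | pastWord es.length σ = es}, f (M.code j0 xp σ) ∂Λ =
      ∫⁻ x, ENNReal.ofReal (M.wordProb es x) * f (M.wcomp es x) ∂(Λ.map (M.code j0 xp)) := by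
  have hD := h.ae_mem_codeDomain j0 xp
  have hcode := aemeasurable_code j0 xp hD
  induction es using List.reverseRecOn generalizing f with
  | nil =>
    simpa [wordProb, wcomp, pastWord] using (lintegral_map' hf.aemeasurable hcode).symm
  | append_singleton l o ih =>
    have hl : MeasurableSet[pastAlgebra E] {σ : CodeSpace E | pastWord l.length σ = l} := by
      rcases l with _ | ⟨o', l⟩
      · simp [pastWord]
      · exact measurableSet_pastWord_eq _ _
    have hl' := pastAlgebra_le _ hl
    have hms : MeasurableSet {σ : CodeSpace E | pastWord (l.length + 1) σ = l ++ [o]} :=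
      pastAlgebra_le _ (measurableSet_pastWord_eq _ _)
    have hshift : MeasurePreserving (shiftMap E) Λ Λ := ⟨measurable_shiftMap, h.2.1⟩
    have hpre : shiftMap E ⁻¹' {σ | pastWord (l.length + 1) σ = l ++ [o]} =
        {σ | pastWord l.length σ = l} ∩ {σ | σ 1 = o} := by
      ext σ
      simp [pastWord_shiftMap]
    simp only [List.length_append, List.length_singleton]
    cases o with
    | none =>
      have hnull : Λ {σ | pastWord (l.length + 1) σ = l ++ [none]} = 0 := by
        refine measure_eq_zero_iff_ae_notMem.2 (hD.mono fun σ hσ hmem => ?_)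
        obtain ⟨e₀, -, h0, -⟩ := hσ.1 0
        rw [pastWord_append_singleton_eq hmem] at h0
        cases h0
      rw [setLIntegral_measure_zero _ _ hnull]
      simp [wordProb_append_singleton]
    | some e =>
      obtain ⟨F, hF, hFc⟩ := M.exists_measurable_eqOn_code j0 xp
      have hfF : Measurable[pastAlgebra E] fun σ => f (M.w e (F σ)) :=
        (hf.comp (M.w_measurable e)).comp hF
      have hm1 : MeasurableSet {σ : CodeSpace E | σ 1 = some e} := measurableSet_coord 1 {some e}
      calc ∫⁻ σ in {σ | pastWord (l.length + 1) σ = l ++ [some e]}, f (M.code j0 xp σ) ∂Λ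
          = ∫⁻ σ in {σ | pastWord l.length σ = l} ∩ {σ | σ 1 = some e},
              f (M.code j0 xp (shiftMap E σ)) ∂Λ := by
            rw [← hpre, ← lintegral_map' (f := fun σ => f (M.code j0 xp σ)) _
              measurable_shiftMap.aemeasurable, (hshift.restrict_preimage hms).map_eq]
            rw [(hshift.restrict_preimage hms).map_eq]
            exact (hf.comp_aemeasurable hcode).restrict
        _ = ∫⁻ σ in {σ | pastWord l.length σ = l} ∩ {σ | σ 1 = some e}, f (M.w e (F σ)) ∂Λ := by
            refine setLIntegral_congr_fun_ae (hl'.inter hm1) ?_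
            filter_upwards [hD, h.ae_code_shiftMap j0 xp hxp huc e] with σ hσ hσe hmem
            rw [hσe hmem.2, hFc σ hσ]
        _ = ∫⁻ σ in {σ | σ 1 = some e},
              {σ | pastWord l.length σ = l}.indicator (fun σ => f (M.w e (F σ))) σ ∂Λ := by
            rw [lintegral_indicator hl', Measure.restrict_restrict hl']
        _ = ∫⁻ σ in {σ | pastWord l.length σ = l},
              ENNReal.ofReal (M.p e (M.code j0 xp σ)) * f (M.w e (M.code j0 xp σ)) ∂Λ := by
            rw [h.setLIntegral_coord_one j0 xp e (Measurable.indicator hfF hl),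
              ← lintegral_indicator hl']
            refine lintegral_congr_ae (hD.mono fun σ hσ => ?_)
            by_cases hmem : σ ∈ {σ : CodeSpace E | pastWord l.length σ = l}
            · simp only [Set.indicator_of_mem hmem, hFc σ hσ]
            · simp only [Set.indicator_of_notMem hmem, mul_zero]
        _ = ∫⁻ x, ENNReal.ofReal (M.wordProb (l ++ [some e]) x) *
              f (M.wcomp (l ++ [some e]) x) ∂(Λ.map (M.code j0 xp)) := by
            rw [ih (f := fun x => ENNReal.ofReal (M.p e x) * f (M.w e x))
              ((M.p_measurable e).ennreal_ofReal.mul (hf.comp (M.w_measurable e)))]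
            refine lintegral_congr fun x => ?_
            rw [wordProb_append_singleton, wcomp_append_singleton,
              ENNReal.ofReal_mul (M.wordProb_nonneg _ _), mul_assoc, pext_some, wext_some]

lemma IsEquilibrium.isPhiOf_map_code (hxp : ∀ j, xp j ∈ M.Kset j)
    (huc : M.IsUniformlyContinuous) (h : M.IsEquilibrium j0 xp Λ) :
    M.IsPhiOf (Λ.map (M.code j0 xp)) Λ := by
  refine ⟨h.1, h.2.1, fun m _ es => ?_⟩
  rw [measure_cylSetL_eq h.2.1 m (1 - es.length), cylSetL_eq_pastWord, ← setLIntegral_one]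
  simpa using h.setLIntegral_comp_code j0 xp hxp huc es (f := fun _ => 1) measurable_const

lemma IsEquilibrium.isInvariantMeasure_map_code (hxp : ∀ j, xp j ∈ M.Kset j)
    (huc : M.IsUniformlyContinuous) (h : M.IsEquilibrium j0 xp Λ) :
    M.IsInvariantMeasure (Λ.map (M.code j0 xp)) := by
  have hcode := aemeasurable_code j0 xp (h.ae_mem_codeDomain j0 xp)
  have := h.1
  refine ⟨Measure.isProbabilityMeasure_map hcode, Measure.ext fun s hs => ?_⟩
  have hf : Measurable (s.indicator (1 : K → ℝ≥0∞)) := measurable_one.indicator hs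
  rw [← lintegral_indicator_one hs, ← lintegral_indicator_one hs, lintegral_adjOp M _ hf,
    lintegral_map' hf.aemeasurable hcode, lintegral_eq_tsum_pastWord 0]
  simp only [markovOp_eq_tsum_pext]
  have hm : ∀ o, Measurable fun x =>
      ENNReal.ofReal (M.pext o x) * s.indicator (1 : K → ℝ≥0∞) (M.wext o x) :=
    fun o => (M.measurable_pext o).ennreal_ofReal.mul (hf.comp (M.measurable_wext o))
  rw [lintegral_tsum fun o => (hm o).aemeasurable]
  have hinj : Function.Injective fun o : Option E => [o] := fun o o' ho => by simpa using ho
  rw [← hinj.tsum_eq]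
  · refine tsum_congr fun o => ?_
    refine Eq.trans (lintegral_congr fun x => ?_)
      (h.setLIntegral_comp_code j0 xp hxp huc [o] hf).symm
    simp [wordProb, wcomp]
  · intro es hes
    by_contra hne
    refine hes ?_
    have : {σ : CodeSpace E | pastWord (0 + 1) σ = es} = ∅ := by
      ext σ
      simp only [Set.mem_ofPred_eq, Set.mem_empty_iff_false, iff_false]
      rintro rfl
      obtain ⟨o, ho⟩ := List.length_eq_one_iff.1 (length_pastWord (0 + 1) σ)
      exact hne ⟨o, ho.symm⟩
    simp [this]

end Equilibrium

end MarkovSystem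

variable {K : Type*} [MetricSpace K] [CompleteSpace K] [MeasurableSpace K] [BorelSpace K]
  {N E : Type*} [Countable N] [Countable E]

/-- If `M` is contractive with rate `0 < a < 1` and uniformly continuous
with `b < ∞`, then `E(M) ⊆ Φ(P(M)) ⊆ Ẽ(M)`, and `F(Φ(μ)) = μ` for every `μ ∈ P(M)`
(where `Λ = Φ(μ)` is expressed by the defining cylinder property `IsPhiOf`). -/
theorem equilibrium_subset_phi_subset_asymptotic
    (M : MarkovSystem K N E) (j0 : N) (xp : N → K) (hxp : ∀ j, xp j ∈ M.Kset j)
    (a : ℝ) (ha0 : 0 < a) (ha1 : a < 1) (hcon : M.IsContractive a)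
    (huc : M.IsUniformlyContinuous) (hb : M.bConst xp ≠ ⊤)
    (pbar : E → K → ℝ) (hpbar : M.IsUCExtensionP pbar) :
    (∀ Λ : Measure (CodeSpace E), M.IsEquilibrium j0 xp Λ →
      ∃ μ : Measure K, M.IsInvariantMeasure μ ∧ M.IsPhiOf μ Λ) ∧
    (∀ (μ : Measure K) (Λ : Measure (CodeSpace E)),
      M.IsInvariantMeasure μ → M.IsPhiOf μ Λ → M.IsAsymptotic j0 xp pbar Λ) ∧
    (∀ (μ : Measure K) (Λ : Measure (CodeSpace E)),
      M.IsInvariantMeasure μ → M.IsPhiOf μ Λ → Measure.map (M.code j0 xp) Λ = μ) := by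
  refine ⟨fun Λ hΛ => ⟨Λ.map (M.code j0 xp), hΛ.isInvariantMeasure_map_code j0 xp hxp huc,
    hΛ.isPhiOf_map_code j0 xp hxp huc⟩, fun μ Λ hμ hΦ => ?_, fun μ Λ hμ hΦ => ?_⟩
  · exact hΦ.isAsymptotic j0 xp hxp ha0.le ha1 hcon hb hμ huc hpbar
  · exact hΦ.map_code j0 xp hxp ha0.le ha1 hcon hb hμ
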